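/- arXiv:0906.4093 — 7 statements merged into one kernel-verified Lean document; each statement's English description precedes it below -/
import Mathlib

section
/- Let K be a field of characteristic p with separable closure K^sep, and let (V, φ) be a unit K[F^r]-module which is finite-dimensional over K, of dimension n. Then there is an isomorphism of unit K^sep[F^r]-modules K^sep ⊗_K V ≅ (K^sep)^{⊕n}, i.e. a K^sep-linear bijection carrying the endomorphism c ⊗ v ↦ c^q ⊗ φ(v) of K^sep ⊗_K V to the coordinatewise q-power map on (K^sep)^{⊕n}. Equivalently, K^sep ⊗_K V has a K^sep-basis consisting of vectors fixed by c ⊗ v ↦ c^q ⊗ φ(v). -/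
/-!
Common definitions: unit `R[F^r]`-modules (Emerton–Kisin / Lyubeznik style), following
the conventions of the paper.  Throughout, `q = p ^ r` and for a commutative ring `R` of
(exponential) characteristic `p`, a unit `R[F^r]`-module is an `R`-module `M` together with
an additive `q`-semilinear map `φ : M → M` whose induced structural map
`R ⊗_{Frob} M → M`, `c ⊗ m ↦ c • φ m`, is bijective.
-/

open scoped TensorProduct

section Preamble

/-- `R` viewed as a module over itself via the `q = p ^ r`-power Frobenius:
`c • x = c ^ p ^ r * x`. -/
def FrobTwist (p r : ℕ) (R : Type*) : Type _ := R

instance (p r : ℕ) (R : Type*) [CommRing R] : AddCommGroup (FrobTwist p r R) :=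
  inferInstanceAs (AddCommGroup R)

noncomputable instance (p r : ℕ) (R : Type*) [CommRing R] [ExpChar R p] :
    Module R (FrobTwist p r R) :=
  Module.compHom R (iterateFrobenius R p r)

theorem FrobTwist.smul_def {p r : ℕ} {R : Type*} [CommRing R] [ExpChar R p] (c : R)
    (x : FrobTwist p r R) : c • x = (c ^ p ^ r * (show R from x) : R) := rfl

variable (p r : ℕ)
variable (R : Type*) [CommRing R] [ExpChar R p]
variable {M : Type*} [AddCommGroup M] [Module R M]

/-- `φ` is additive and `q = p ^ r`-semilinear: `φ (c • m) = c ^ q • φ m`. -/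
def IsFrobSemilinear (φ : M →+ M) : Prop :=
  ∀ (c : R) (m : M), φ (c • m) = c ^ p ^ r • φ m

/-- The structural map `R ⊗_{Frob} M → M`, `c ⊗ m ↦ c • φ m`. -/
noncomputable def unitMap (φ : M →+ M) (hφ : IsFrobSemilinear p r R φ) :
    FrobTwist p r R ⊗[R] M →+ M :=
  TensorProduct.liftAddHom
    (AddMonoidHom.mk'
      (fun c : FrobTwist p r R =>
        AddMonoidHom.mk' (fun m : M => (show R from c) • φ m)
          (fun m m' => by
            show (show R from c) • φ (m + m') =
              (show R from c) • φ m + (show R from c) • φ m'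
            rw [map_add, smul_add]))
      (fun c c' => by
        ext m
        show ((show R from c) + (show R from c')) • φ m = _
        rw [add_smul]
        rfl))
    (fun a c m => by
      show (a ^ p ^ r * (show R from c)) • φ m = (show R from c) • φ (a • m)
      rw [hφ, mul_comm, mul_smul])

/-- `(M, φ)` is a unit `R[F^r]`-module: `φ` is `q = p ^ r`-semilinear and the induced
structural map `R ⊗_{Frob} M → M` is bijective. -/
def IsUnitFMod (φ : M →+ M) : Prop :=
  ∃ hφ : IsFrobSemilinear p r R φ, Function.Bijective (unitMap p r R φ hφ)

/-- `(M, φ)` is finitely generated as a left `R[F^r]`-module: there is a finite subset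
`s ⊆ M` such that the only `φ`-stable `R`-submodule of `M` containing `s` is `M` itself. -/
def IsFGFMod (φ : M →+ M) : Prop :=
  ∃ s : Finset M, ∀ N : Submodule R M, (∀ x ∈ N, φ x ∈ N) → (↑s : Set M) ⊆ ↑N → N = ⊤

/-- A root of `(M, φ)`: a finitely generated submodule `M₀` such that the submodule
generated by `φ (M₀)` contains `M₀`, and such that the only `φ`-stable submodule
containing `M₀` is `M` itself. -/
def IsRoot (φ : M →+ M) (M₀ : Submodule R M) : Prop :=
  M₀.FG ∧ M₀ ≤ Submodule.span R (⇑φ '' ↑M₀) ∧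
    ∀ N : Submodule R M, (∀ x ∈ N, φ x ∈ N) → M₀ ≤ N → N = ⊤

end Preamble

section Helpers

open Polynomial

variable {L : Type*} [Field L]

/-- The polynomials expressing the coordinates of a fixed vector. -/
noncomputable def coordPoly (q : ℕ) (a : ℕ → L) : ℕ → L[X]
  | 0 => C (a 0) * X ^ q
  | i + 1 => coordPoly q a i ^ q + C (a (i + 1)) * X ^ q

theorem coordPoly_dvd (q : ℕ) (hq : 2 ≤ q) (a : ℕ → L) (i : ℕ) :
    (X : L[X]) ^ 2 ∣ coordPoly q a i := by
  have h0 : (X : L[X]) ^ 2 ∣ X ^ q := pow_dvd_pow _ hq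
  induction i with
  | zero => exact Dvd.dvd.mul_left h0 _
  | succ i ih => exact dvd_add (dvd_pow ih (by omega)) (Dvd.dvd.mul_left h0 _)

theorem coordPoly_eq_zero (q : ℕ) (hq : 2 ≤ q) (a : ℕ → L) (i : ℕ)
    (h : coordPoly q a i = 0) : ∀ j ≤ i, a j = 0 := by
  induction i with
  | zero =>
    intro j hj
    obtain rfl : j = 0 := by omega
    simpa [coordPoly] using h
  | succ i ih =>
    obtain ⟨R, hR⟩ := coordPoly_dvd q hq a i
    have h1 : (X : L[X]) ^ q * (X ^ q * R ^ q + C (a (i + 1))) = 0 := by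
      rw [← h, coordPoly, hR]; ring
    have h2 : (X : L[X]) ^ q * R ^ q + C (a (i + 1)) = 0 := by
      rcases mul_eq_zero.1 h1 with h3 | h3
      · exact absurd h3 (pow_ne_zero _ X_ne_zero)
      · exact h3
    have h3 : a (i + 1) = 0 := by
      have := congrArg (eval 0) h2
      have hq0 : q ≠ 0 := by omega
      simpa [hq0] using this
    have h4 : coordPoly q a i = 0 := by
      rw [coordPoly, h3] at h
      simp only [map_zero, zero_mul, add_zero] at h
      exact pow_eq_zero_iff (by omega) |>.1 h
    intro j hj
    rcases Nat.lt_or_ge j (i + 1) with hj' | hj'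
    · exact ih h4 j (by omega)
    · obtain rfl : j = i + 1 := by omega
      exact h3

theorem coordPoly_derivative (q : ℕ) (hq0 : (q : L) = 0) (a : ℕ → L) (i : ℕ) :
    derivative (coordPoly q a i) = 0 := by
  cases i <;> simp [coordPoly, derivative_pow, hq0]

theorem exists_coord_root [IsSepClosed L] (q : ℕ) (hq : 2 ≤ q) (hq0 : (q : L) = 0)
    (a : ℕ → L) (k : ℕ) (h : ∃ j ≤ k, a j ≠ 0) :
    ∃ t : L, t ≠ 0 ∧ (coordPoly q a k).eval t = t := by
  have hne : coordPoly q a k ≠ 0 := fun h0 => by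
    obtain ⟨j, hj, hj'⟩ := h
    exact hj' (coordPoly_eq_zero q hq a k h0 j hj)
  obtain ⟨R, hR⟩ := coordPoly_dvd q hq a k
  have hR0 : R ≠ 0 := by rintro rfl; simp [hR] at hne
  have hsep : (coordPoly q a k - X).Separable := by
    rw [separable_def']
    refine ⟨0, -1, ?_⟩
    simp [coordPoly_derivative q hq0]
  have hdvd : (X * R - 1) ∣ coordPoly q a k - X := ⟨X, by rw [hR]; ring⟩
  have hsepQ := hsep.of_dvd hdvd
  have hdeg : (X * R - 1 : L[X]).degree ≠ 0 := by
    intro hd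
    replace hd := natDegree_eq_of_degree_eq_some (n := 0) (by simpa using hd)
    have h1 : (X * R - 1 : L[X]).natDegree = R.natDegree + 1 := by
      rw [← C_1, natDegree_sub_C, natDegree_X_mul hR0]
    omega
  obtain ⟨t, ht⟩ := IsSepClosed.exists_root _ hdeg hsepQ
  refine ⟨t, ?_, ?_⟩
  · rintro rfl
    simp [Polynomial.IsRoot.def] at ht
  · have := ht.dvd hdvd
    simpa [Polynomial.IsRoot.def, sub_eq_zero] using this

theorem exists_artinSchreier [IsSepClosed L] (q : ℕ) (hq : 2 ≤ q) (hq0 : (q : L) = 0) (c : L) :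
    ∃ y : L, y ^ q - y = c := by
  have hsep : (X ^ q - X - C c : L[X]).Separable := by
    rw [separable_def']
    refine ⟨0, -1, ?_⟩
    simp [derivative_X_pow, hq0]
  have hdeg : (X ^ q - X - C c : L[X]).degree ≠ 0 := by
    have : (X ^ q - X - C c : L[X]).natDegree = q := by
      rw [natDegree_sub_C]
      exact FiniteField.X_pow_card_sub_X_natDegree_eq L (by omega)
    intro hd
    have := natDegree_eq_of_degree_eq_some (n := 0) (by simpa using hd)
    omega
  obtain ⟨y, hy⟩ := IsSepClosed.exists_root _ hdeg hsep
  exact ⟨y, by simpa [Polynomial.IsRoot.def, sub_eq_zero] using hy⟩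

theorem exists_fixed [IsSepClosed L] (q : ℕ) (hq : 2 ≤ q) (hq0 : (q : L) = 0)
    {W : Type*} [AddCommGroup W] [Module L W] [FiniteDimensional L W] [Nontrivial W]
    (σ : L →+* L) (hσ : ∀ c, σ c = c ^ q)
    (f : W →ₛₗ[σ] W) (hf : Submodule.span L (Set.range f) = ⊤) :
    ∃ x : W, x ≠ 0 ∧ f x = x := by
  -- a vector that is never killed
  let S : ℕ → Submodule L W := fun k => (fun N => Submodule.comap f N)^[k] ⊥
  have hSs : ∀ k, S (k + 1) = Submodule.comap f (S k) := fun k =>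
    Function.iterate_succ_apply' _ _ _
  have hSmem : ∀ k x, x ∈ S k ↔ f^[k] x = 0 := by
    intro k
    induction k with
    | zero => intro x; simp [S]
    | succ k ih => intro x; rw [hSs, Submodule.mem_comap, ih, Function.iterate_succ_apply]
  have hStop : ∀ k, S k ≠ ⊤ := by
    intro k
    induction k with
    | zero => simp [S]
    | succ k ih =>
      intro h
      apply ih
      rw [eq_top_iff, ← hf, Submodule.span_le]
      rintro _ ⟨x, rfl⟩
      have : x ∈ S (k + 1) := by rw [h]; trivial
      rwa [hSs] at this
  have hSmono : Monotone S := by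
    refine monotone_nat_of_le_succ fun k x hx => ?_
    rw [hSmem] at hx ⊢
    rw [Function.iterate_succ_apply', hx, map_zero]
  obtain ⟨n, hn⟩ := monotone_stabilizes_iff_noetherian.2 (inferInstance : IsNoetherian L W)
    ⟨S, hSmono⟩
  obtain ⟨v, hv⟩ : ∃ v, v ∉ S n := by
    by_contra! h
    exact hStop n (eq_top_iff.2 fun x _ => h x)
  have hv0 : ∀ m, f^[m] v ≠ 0 := by
    intro m h
    rw [← hSmem] at h
    apply hv
    have h1 : S n = S (max n m) := hn _ (le_max_left _ _)
    rw [h1]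
    exact hSmono (le_max_right _ _) h
  -- the minimal relation
  let T : ℕ → Submodule L W := fun m => Submodule.span L ((fun i => f^[i] v) '' Set.Iio m)
  have hTmono : Monotone T := fun m m' h =>
    Submodule.span_mono (Set.image_mono (Set.Iio_subset_Iio h))
  have hex : ∃ m, f^[m] v ∈ T m := by
    obtain ⟨n, hn⟩ := monotone_stabilizes_iff_noetherian.2 (inferInstance : IsNoetherian L W)
      ⟨T, hTmono⟩
    refine ⟨n, ?_⟩
    have h1 : T n = T (n + 1) := hn _ (Nat.le_succ _)
    rw [h1]
    exact Submodule.subset_span ⟨n, by simp, rfl⟩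
  classical
  obtain ⟨m, hm, hmin⟩ : ∃ m, f^[m] v ∈ T m ∧ ∀ k < m, f^[k] v ∉ T k :=
    ⟨Nat.find hex, Nat.find_spec hex, fun k hk => Nat.find_min hex hk⟩
  have hm0 : m ≠ 0 := by
    rintro rfl
    apply hv0 0
    simpa [T] using hm
  obtain ⟨k, rfl⟩ := Nat.exists_eq_succ_of_ne_zero hm0
  obtain ⟨a, ha⟩ : ∃ a : ℕ → L, ∑ i ∈ Finset.range (k + 1), a i • f^[i] v = f^[k + 1] v := by
    have : f^[k + 1] v ∈ Submodule.span L
        ((fun i => f^[i] v) '' ((Finset.range (k + 1) : Finset ℕ) : Set ℕ)) := by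
      simpa [T] using hm
    rw [Submodule.mem_span_image_finset_iff_exists_fun'] at this
    exact this
  have hane : ∃ j ≤ k, a j ≠ 0 := by
    by_contra! h
    apply hv0 (k + 1)
    rw [← ha]
    refine Finset.sum_eq_zero fun i hi => ?_
    rw [h i (by simpa [Nat.lt_succ_iff] using hi), zero_smul]
  obtain ⟨t, ht0, ht⟩ := exists_coord_root q hq hq0 a k hane
  let x : ℕ → L := fun i => (coordPoly q a i).eval t
  have hx0 : x 0 = a 0 * t ^ q := by simp [x, coordPoly]
  have hxs : ∀ i, x (i + 1) = x i ^ q + a (i + 1) * t ^ q := fun i => by simp [x, coordPoly]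
  have hxk : x k = t := ht
  refine ⟨∑ i ∈ Finset.range (k + 1), x i • f^[i] v, ?_, ?_⟩
  · intro h
    rw [Finset.sum_range_succ, hxk] at h
    apply hmin k (Nat.lt_succ_self k)
    have h2 : t • f^[k] v ∈ T k := by
      rw [eq_neg_of_add_eq_zero_right h]
      refine Submodule.neg_mem _ (Submodule.sum_mem _ fun i hi => Submodule.smul_mem _ _ ?_)
      exact Submodule.subset_span ⟨i, by simpa using hi, rfl⟩
    exact (Submodule.smul_mem_iff _ ht0).1 h2
  · have h1 : f (∑ i ∈ Finset.range (k + 1), x i • f^[i] v)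
        = ∑ i ∈ Finset.range (k + 1), x i ^ q • f^[i + 1] v := by
      rw [map_sum]
      refine Finset.sum_congr rfl fun i _ => ?_
      rw [map_smulₛₗ, hσ, Function.iterate_succ_apply']
    rw [h1, Finset.sum_range_succ, hxk, ← ha, Finset.sum_range_succ', Finset.sum_range_succ',
      hx0, smul_add, Finset.smul_sum, ← add_assoc, ← Finset.sum_add_distrib]
    congr 1
    · refine Finset.sum_congr rfl fun i _ => ?_
      rw [hxs, add_smul, mul_comm, mul_smul]
    · rw [mul_comm, mul_smul]

theorem span_fixed [IsSepClosed L] (q : ℕ) (hq : 2 ≤ q) (hq0 : (q : L) = 0)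
    {W : Type*} [AddCommGroup W] [Module L W] [FiniteDimensional L W]
    (σ : L →+* L) (hσ : ∀ c, σ c = c ^ q)
    (f : W →ₛₗ[σ] W) (hf : Submodule.span L (Set.range f) = ⊤) :
    Submodule.span L {x : W | f x = x} = ⊤ := by
  set U := Submodule.span L {x : W | f x = x} with hU
  by_contra hne
  have hUf : U ≤ U.comap f := by
    refine Submodule.span_le.2 ?_
    intro x hx
    have hx' : f x = x := hx
    change f x ∈ U
    rw [hx']
    exact Submodule.subset_span hx
  have : Nontrivial (W ⧸ U) := Submodule.Quotient.nontrivial_iff.2 hne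
  let g : (W ⧸ U) →ₛₗ[σ] (W ⧸ U) := U.mapQ U f hUf
  have hg : ∀ w, g (U.mkQ w) = U.mkQ (f w) := fun w => rfl
  have hgs : Submodule.span L (Set.range g) = ⊤ := by
    have h1 : Submodule.map U.mkQ (Submodule.span L (Set.range f)) ≤
        Submodule.span L (Set.range g) := by
      rw [Submodule.map_span, Submodule.span_le]
      rintro _ ⟨_, ⟨w, rfl⟩, rfl⟩
      exact Submodule.subset_span ⟨U.mkQ w, hg w⟩
    rw [hf, Submodule.map_top, Submodule.range_mkQ] at h1
    exact top_le_iff.1 h1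
  obtain ⟨y, hy0, hy⟩ := exists_fixed q hq hq0 σ hσ g hgs
  obtain ⟨w, rfl⟩ := U.mkQ_surjective y
  have hsolve : ∀ u ∈ U, ∀ c : L, ∃ z ∈ U, f z - z = c • u := by
    intro u hu
    induction hu using Submodule.span_induction with
    | mem u hu =>
      intro c
      obtain ⟨y, hy⟩ := exists_artinSchreier q hq hq0 c
      refine ⟨y • u, Submodule.smul_mem _ _ (Submodule.subset_span hu), ?_⟩
      have hu' : f u = u := hu
      rw [map_smulₛₗ, hσ, hu', ← sub_smul, hy]
    | zero => intro c; exact ⟨0, Submodule.zero_mem _, by simp⟩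
    | add u u' _ _ h h' =>
      intro c
      obtain ⟨z, hz, hz'⟩ := h c
      obtain ⟨y, hy, hy'⟩ := h' c
      refine ⟨z + y, Submodule.add_mem _ hz hy, ?_⟩
      rw [map_add, smul_add, ← hz', ← hy']; abel
    | smul b u _ h =>
      intro c
      obtain ⟨z, hz, hz'⟩ := h (c * b)
      exact ⟨z, hz, by rw [hz', mul_smul]⟩
  have hd : f w - w ∈ U := by
    rw [hg] at hy
    exact (Submodule.Quotient.eq U).1 hy
  obtain ⟨z, hz, hz'⟩ := hsolve _ hd 1
  rw [one_smul] at hz'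
  apply hy0
  rw [Submodule.mkQ_apply, Submodule.Quotient.mk_eq_zero]
  have hfix : w - z ∈ U := by
    refine Submodule.subset_span ?_
    change f (w - z) = w - z
    rw [map_sub, sub_eq_sub_iff_sub_eq_sub, ← hz']
  simpa using Submodule.add_mem _ hfix hz

end Helpers

/-- For a finite-dimensional unit `K[F^r]`-module `(V, φ)` of dimension
`n`, the base change `K^sep ⊗_K V`, with its induced endomorphism `c ⊗ v ↦ c ^ q ⊗ φ v`,
is isomorphic as a unit `K^sep[F^r]`-module to `(K^sep)^{⊕n}` with the coordinatewise
`q`-power structure. -/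
theorem statement1 (p r : ℕ) [Fact p.Prime] (hr : 0 < r)
    (K : Type*) [Field K] [CharP K p]
    (Ksep : Type*) [Field Ksep] [Algebra K Ksep] [IsSepClosure K Ksep]
    (V : Type*) [AddCommGroup V] [Module K V] [FiniteDimensional K V]
    (n : ℕ) (hn : Module.finrank K V = n)
    (φ : V →+ V) (hφ : IsFrobSemilinear p r K φ)
    (hunit : Function.Bijective (unitMap p r K φ hφ))
    (φs : Ksep ⊗[K] V →+ Ksep ⊗[K] V)
    (hφs : ∀ (c : Ksep) (v : V), φs (c ⊗ₜ[K] v) = (c ^ p ^ r) ⊗ₜ[K] φ v) :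
    ∃ e : (Ksep ⊗[K] V) ≃ₗ[Ksep] (Fin n → Ksep),
      ∀ x, e (φs x) = fun i => (e x i) ^ p ^ r := by
  have hp : p.Prime := Fact.out
  haveI : CharP Ksep p := charP_of_injective_algebraMap (algebraMap K Ksep).injective p
  haveI : ExpChar Ksep p := ExpChar.prime hp
  haveI : IsSepClosed Ksep := IsSepClosure.sep_closed K
  have hq : 2 ≤ p ^ r := le_trans hp.two_le (Nat.le_self_pow hr.ne' p)
  have hq0 : ((p ^ r : ℕ) : Ksep) = 0 := by
    rw [Nat.cast_pow, CharP.cast_eq_zero, zero_pow hr.ne']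
  let f : (Ksep ⊗[K] V) →ₛₗ[iterateFrobenius Ksep p r] (Ksep ⊗[K] V) :=
    { toFun := φs
      map_add' := φs.map_add
      map_smul' := by
        intro c x
        induction x using TensorProduct.induction_on with
        | zero => simp
        | tmul b v =>
          rw [TensorProduct.smul_tmul', hφs, hφs, TensorProduct.smul_tmul', smul_eq_mul,
            smul_eq_mul, mul_pow, iterateFrobenius_def]
        | add x y hx hy => rw [smul_add, map_add, map_add, smul_add, hx, hy] }
  have hff : ∀ x, f x = φs x := fun _ => rfl
  have hspan : Submodule.span K (Set.range φ) = ⊤ := by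
    rw [eq_top_iff]
    rintro v -
    obtain ⟨z, rfl⟩ := hunit.2 v
    induction z using TensorProduct.induction_on with
    | zero => rw [map_zero]; exact Submodule.zero_mem _
    | tmul c m => exact Submodule.smul_mem _ (show K from c) (Submodule.subset_span ⟨m, rfl⟩)
    | add x y hx hy => rw [map_add]; exact Submodule.add_mem _ hx hy
  have hfs : Submodule.span Ksep (Set.range f) = ⊤ := by
    rw [eq_top_iff]
    rintro x -
    induction x using TensorProduct.induction_on with
    | zero => exact Submodule.zero_mem _
    | add x y hx hy => exact Submodule.add_mem _ hx hy
    | tmul b v =>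
      have hv : v ∈ Submodule.span K (Set.range φ) := by rw [hspan]; trivial
      induction hv using Submodule.span_induction generalizing b with
      | mem u hu =>
        obtain ⟨m, rfl⟩ := hu
        have h1 : b ⊗ₜ[K] φ m = b • f (1 ⊗ₜ[K] m) := by
          rw [hff, hφs, one_pow, TensorProduct.smul_tmul', smul_eq_mul, mul_one]
        rw [h1]
        exact Submodule.smul_mem _ _ (Submodule.subset_span ⟨_, rfl⟩)
      | zero => rw [TensorProduct.tmul_zero]; exact Submodule.zero_mem _
      | add u u' _ _ h h' => rw [TensorProduct.tmul_add]; exact Submodule.add_mem _ (h b) (h' b)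
      | smul c u _ h => rw [← TensorProduct.smul_tmul]; exact h _
  have hfix := span_fixed (p ^ r) hq hq0 (iterateFrobenius Ksep p r)
    (fun c => iterateFrobenius_def p r c) f hfs
  obtain ⟨ι, B, hB⟩ : ∃ (ι : Set (Ksep ⊗[K] V)) (B : Module.Basis ι Ksep (Ksep ⊗[K] V)),
      ∀ i, φs (B i) = B i :=
    ⟨_, Module.Basis.ofSpan hfix.ge, fun i => Module.Basis.ofSpan_subset hfix.ge ⟨i, rfl⟩⟩
  have hrank : Module.finrank Ksep (Ksep ⊗[K] V) = n := by
    rw [Module.finrank_baseChange, hn]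
  haveI : Finite ι := Module.Finite.finite_basis B
  have hcard : Nat.card ι = n := by rw [← hrank, Module.finrank_eq_nat_card_basis B]
  let B' := B.reindex (Finite.equivFinOfCardEq hcard)
  have hB' : ∀ i, f (B' i) = B' i := fun i => by
    rw [Module.Basis.reindex_apply]; exact hB _
  refine ⟨B'.equivFun, fun x => ?_⟩
  have hx : φs x = ∑ i, (B'.equivFun x i) ^ p ^ r • B' i := by
    conv_lhs => rw [← B'.sum_equivFun x]
    rw [← hff, map_sum]
    refine Finset.sum_congr rfl fun i _ => ?_
    rw [map_smulₛₗ, hB', iterateFrobenius_def]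
  rw [hx, ← B'.equivFun_symm_apply (fun i => (B'.equivFun x i) ^ p ^ r),
    LinearEquiv.apply_symm_apply]
end

section
/- Let K be a field of characteristic p with separable closure K^sep, and let (V, φ) be a unit K[F^r]-module which is finite-dimensional over K, of dimension n. Then there exists a finite separable field extension K'/K (an intermediate field of K^sep/K, finite-dimensional over K) and an isomorphism of unit K'[F^r]-modules K' ⊗_K V ≅ (K')^{⊕n}, i.e. a K'-linear bijection carrying the endomorphism c ⊗ v ↦ c^q ⊗ φ(v) to the coordinatewise q-power map on (K')^{⊕n}. -/
/-!
Common definitions: unit `R[F^r]`-modules (Emerton–Kisin / Lyubeznik style), following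
the conventions of the paper.  Throughout, `q = p ^ r` and for a commutative ring `R` of
(exponential) characteristic `p`, a unit `R[F^r]`-module is an `R`-module `M` together with
an additive `q`-semilinear map `φ : M → M` whose induced structural map
`R ⊗_{Frob} M → M`, `c ⊗ m ↦ c • φ m`, is bijective.
-/

open scoped TensorProduct

set_option synthInstance.maxHeartbeats 1000000

section Aux
open Polynomial

theorem aux_inj {L W : Type*} [Field L] [AddCommGroup W] [Module L W] [FiniteDimensional L W]
    {q : ℕ} (hq : 2 ≤ q) (φ : W →+ W) (h : ∀ (c : L) w, φ (c • w) = c ^ q • φ w)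
    (hs : Submodule.span L (Set.range φ) = ⊤) (w : W) (hw : φ w = 0) : w = 0 := by
  classical
  let b := Module.finBasis L W
  have hφ : ∀ y, φ y = ∑ i, (b.repr y i) ^ q • φ (b i) := by
    intro y
    conv_lhs => rw [← b.sum_repr y]
    rw [map_sum]
    simp only [h]
  have htop : ⊤ ≤ Submodule.span L (Set.range (fun i => φ (b i))) := by
    rw [← hs, Submodule.span_le]
    rintro _ ⟨y, rfl⟩
    rw [hφ y]
    exact Submodule.sum_mem _ fun i _ => Submodule.smul_mem _ _ (Submodule.subset_span ⟨i, rfl⟩)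
  have hli : LinearIndependent L (fun i => φ (b i)) :=
    linearIndependent_of_top_le_span_of_card_eq_finrank htop (by simp)
  rw [hφ w] at hw
  have := Fintype.linearIndependent_iff.1 hli _ hw
  rw [← b.sum_repr w]
  refine Finset.sum_eq_zero fun i _ => ?_
  rw [pow_eq_zero_iff (by omega) |>.1 (this i), zero_smul]

noncomputable def auxPoly {L : Type*} [Field L] (q : ℕ) (a : ℕ → L) : ℕ → L[X]
  | 0 => C (a 0) * X ^ q
  | i + 1 => auxPoly q a i ^ q + C (a (i + 1)) * X ^ q

theorem auxPoly_dvd {L : Type*} [Field L] {q : ℕ} (a : ℕ → L) (i : ℕ) :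
    X ^ q ∣ auxPoly q a i ∨ ¬ 2 ≤ q := by
  by_cases hq : 2 ≤ q
  · left
    induction i with
    | zero => exact Dvd.intro_left _ rfl
    | succ i ih =>
      refine dvd_add ?_ (Dvd.intro_left _ rfl)
      exact pow_dvd_pow_of_dvd ((dvd_pow_self X (by omega)).trans ih) q
  · exact Or.inr hq

theorem auxPoly_der {L : Type*} [Field L] {q : ℕ} (hqL : (q : L) = 0) (a : ℕ → L) (i : ℕ) :
    derivative (auxPoly q a i) = 0 := by
  cases i <;> simp [auxPoly, derivative_pow, hqL]

theorem auxPoly_zero {L : Type*} [Field L] {q : ℕ} (hq : 2 ≤ q) (a : ℕ → L) (i : ℕ)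
    (h : auxPoly q a i = 0) : ∀ j ≤ i, a j = 0 := by
  induction i with
  | zero =>
    intro j hj
    obtain rfl : j = 0 := by omega
    simpa [auxPoly] using h
  | succ i ih =>
    have h1 : X ^ (q * q) ∣ auxPoly q a i ^ q := by
      rw [pow_mul]
      exact pow_dvd_pow_of_dvd ((auxPoly_dvd a i).resolve_right (not_not.2 hq)) q
    have h2 : (auxPoly q a i ^ q).coeff q = 0 := X_pow_dvd_iff.1 h1 q (by nlinarith)
    have h3 : a (i + 1) = 0 := by
      have := congrArg (fun f => coeff f q) h
      simpa [auxPoly, h2] using this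
    have h4 : auxPoly q a i = 0 := by
      rw [auxPoly, h3] at h
      simpa [show q ≠ 0 by omega] using h
    intro j hj
    rcases Nat.lt_or_ge i j with hij | hij
    · obtain rfl : j = i + 1 := by omega
      exact h3
    · exact ih h4 j hij

theorem aux_root {L : Type*} [Field L] [IsSepClosed L] {q : ℕ} (hq : 2 ≤ q)
    (hqL : (q : L) = 0) (a : ℕ → L) (k : ℕ) (ha : ∃ j ≤ k, a j ≠ 0) :
    ∃ t : L, t ≠ 0 ∧ (auxPoly q a k).eval t = t := by
  obtain ⟨f, hf⟩ := ((dvd_pow_self X (show q ≠ 0 by omega)).trans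
    ((auxPoly_dvd (q := q) a k).resolve_right (not_not.2 hq)) : (X : L[X]) ∣ _)
  have hsep : (X * (f - 1)).Separable := by
    rw [mul_sub, ← hf, mul_one]
    refine ⟨0, -1, ?_⟩
    simp [auxPoly_der hqL]
  have hsep' : (f - 1).Separable := hsep.of_mul_right
  have hdeg : (f - 1).degree ≠ 0 := by
    intro h0
    rw [eq_C_of_degree_eq_zero h0] at hsep
    have hf2 : f = C ((f - 1).coeff 0 + 1) := by
      rw [C_add, C_1, ← eq_C_of_degree_eq_zero h0]; ring
    have hd := auxPoly_der hqL a k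
    rw [hf, hf2] at hd
    simp only [derivative_mul, derivative_X, derivative_C, one_mul, mul_zero, add_zero] at hd
    rw [← hf2] at hd
    rw [hd, mul_zero] at hf
    obtain ⟨j, hj, hj'⟩ := ha
    exact hj' (auxPoly_zero hq a k hf j hj)
  obtain ⟨t, ht⟩ := IsSepClosed.exists_root (f - 1) hdeg hsep'
  have ht1 : f.eval t = 1 := by
    have : (f - 1).eval t = 0 := ht
    simpa [sub_eq_zero] using this
  refine ⟨t, ?_, by rw [hf]; simp [ht1]⟩
  rintro rfl
  have h2 : X ^ 2 ∣ X * f := by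
    rw [← hf]
    exact (pow_dvd_pow X hq).trans ((auxPoly_dvd a k).resolve_right (not_not.2 hq))
  rw [pow_two] at h2
  have h3 : X ∣ f := (mul_dvd_mul_iff_left X_ne_zero).1 h2
  rw [X_dvd_iff, coeff_zero_eq_eval_zero, ht1] at h3
  exact one_ne_zero h3

theorem aux_as {L : Type*} [Field L] [IsSepClosed L] {q : ℕ} (hq : 2 ≤ q)
    (hqL : (q : L) = 0) (c : L) : ∃ s : L, s ^ q - s = c := by
  have hd : (X ^ q - X - C c : L[X]).natDegree = q := by
    rw [sub_sub]
    have h1 : (X + C c : L[X]).natDegree = 1 := natDegree_X_add_C c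
    rw [natDegree_sub_eq_left_of_natDegree_lt, natDegree_X_pow]
    rw [h1, natDegree_X_pow]; omega
  obtain ⟨t, ht⟩ := IsSepClosed.exists_root (X ^ q - X - C c : L[X])
    (fun h0 => by have := natDegree_eq_zero_iff_degree_le_zero.2 h0.le; omega)
    ⟨0, -1, by simp [derivative_pow, hqL]⟩
  exact ⟨t, by simpa [sub_eq_zero] using ht⟩

theorem aux_fixed {L W : Type*} [Field L] [IsSepClosed L] [AddCommGroup W] [Module L W]
    [FiniteDimensional L W]
    {q : ℕ} (hq : 2 ≤ q) (hqL : (q : L) = 0)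
    (φ : W →+ W) (h : ∀ (c : L) w, φ (c • w) = c ^ q • φ w)
    (hinj : ∀ w, φ w = 0 → w = 0) (w : W) (hw : w ≠ 0) : ∃ x, x ≠ 0 ∧ φ x = x := by
  classical
  let e : ℕ → W := fun i => φ^[i] w
  have he : ∀ i, φ (e i) = e (i + 1) := fun i => (Function.iterate_succ_apply' φ i w).symm
  have hne : ∀ i, e i ≠ 0 := by
    intro i
    induction i with
    | zero => exact hw
    | succ i ih => rw [← he]; exact fun h0 => ih (hinj _ h0)
  have hex : ∃ k, ¬ LinearIndependent L (fun i : Fin k => e i) := by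
    refine ⟨Module.finrank L W + 1, fun hl => ?_⟩
    have := hl.fintype_card_le_finrank
    simp at this
  obtain ⟨m, hm, hm'⟩ : ∃ m, LinearIndependent L (fun i : Fin m => e i) ∧
      ¬ LinearIndependent L (fun i : Fin (m + 1) => e i) := by
    by_contra! hcon
    obtain ⟨k, hk⟩ := hex
    refine hk ?_
    clear hk
    induction k with
    | zero => exact linearIndependent_empty_type
    | succ k ih => exact hcon k ih
  have hmem : e m ∈ Submodule.span L (Set.range (fun i : Fin m => e i)) := by
    by_contra hc
    exact hm' (linearIndependent_finSucc'.2 ⟨hm, hc⟩)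
  obtain ⟨a', ha'⟩ := (Submodule.mem_span_range_iff_exists_fun L).1 hmem
  let a : ℕ → L := fun i => if hi : i < m then a' ⟨i, hi⟩ else 0
  have ha : ∑ i ∈ Finset.range m, a i • e i = e m := by
    rw [← ha', Finset.sum_range]
    simp [a]
  obtain ⟨k, rfl⟩ : ∃ k, m = k + 1 := by
    rcases m with _ | k
    · simp at ha
      exact absurd ha.symm (hne 0)
    · exact ⟨k, rfl⟩
  obtain ⟨t, ht0, ht⟩ := aux_root hq hqL a k (by
    by_contra! hc
    refine hne (k + 1) ?_
    rw [← ha]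
    exact Finset.sum_eq_zero fun i hi => by
      rw [hc i (by simpa [Nat.lt_succ_iff] using hi), zero_smul])
  let g : ℕ → L := fun i => (auxPoly q a i).eval t
  have hg0 : g 0 = a 0 * t ^ q := by simp [g, auxPoly]
  have hgs : ∀ i, g (i + 1) = g i ^ q + a (i + 1) * t ^ q := by simp [g, auxPoly]
  have hgk : g k = t := ht
  refine ⟨∑ i ∈ Finset.range (k + 1), g i • e i, ?_, ?_⟩
  · intro h0
    rw [Finset.sum_range] at h0
    have := Fintype.linearIndependent_iff.1 hm (fun i => g i) h0 (Fin.last k)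
    exact ht0 (hgk ▸ this)
  · rw [map_sum]
    simp only [h, he]
    rw [Finset.sum_range_succ, hgk, ← ha, Finset.sum_range_succ', Finset.sum_range_succ' (fun i => g i • e i)]
    simp only [hg0, hgs, add_smul, Finset.sum_add_distrib, smul_add, Finset.smul_sum, smul_smul]
    simp only [mul_comm (t ^ q)]
    abel

theorem aux_span {L W : Type*} [Field L] [IsSepClosed L] [AddCommGroup W] [Module L W]
    [FiniteDimensional L W]
    {q : ℕ} (hq : 2 ≤ q) (hqL : (q : L) = 0)
    (φ : W →+ W) (h : ∀ (c : L) w, φ (c • w) = c ^ q • φ w)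
    (hs : Submodule.span L (Set.range φ) = ⊤) :
    Submodule.span L {x | φ x = x} = ⊤ := by
  classical
  by_contra hU
  set U := Submodule.span L {x | φ x = x} with hUdef
  have hφU : ∀ u ∈ U, φ u ∈ U := by
    intro u hu
    induction hu using Submodule.span_induction with
    | mem x hx => rw [show φ x = x from hx]; exact Submodule.subset_span hx
    | zero => simp
    | add x y _ _ hx hy => rw [map_add]; exact add_mem hx hy
    | smul c x _ hx => rw [h]; exact U.smul_mem _ hx
  have hsol : ∀ u ∈ U, ∃ z ∈ U, φ z - z = u := by
    intro u hu
    induction hu using Submodule.closure_induction with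
    | zero => exact ⟨0, by simp, by simp⟩
    | add x y _ _ hx hy =>
      obtain ⟨z, hz, rfl⟩ := hx
      obtain ⟨z', hz', rfl⟩ := hy
      exact ⟨z + z', add_mem hz hz', by rw [map_add]; abel⟩
    | smul_mem c x hx =>
      obtain ⟨s, rfl⟩ := aux_as hq hqL c
      refine ⟨s • x, U.smul_mem _ (Submodule.subset_span hx), ?_⟩
      rw [h, show φ x = x from hx, sub_smul]
  let ψ : W ⧸ U →+ W ⧸ U := QuotientAddGroup.map U.toAddSubgroup U.toAddSubgroup φ
    (fun u hu => hφU u hu)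
  have hψ : ∀ w, ψ (U.mkQ w) = U.mkQ (φ w) := fun w => rfl
  have hψs : ∀ (c : L) w, ψ (c • w) = c ^ q • ψ w := by
    intro c w
    obtain ⟨w, rfl⟩ := U.mkQ_surjective w
    rw [← map_smul, hψ, h, hψ, map_smul]
  have hψspan : Submodule.span L (Set.range ψ) = ⊤ := by
    have h1 := congrArg (Submodule.map U.mkQ) hs
    rw [Submodule.map_span, Submodule.map_top, Submodule.range_mkQ] at h1
    rw [eq_top_iff, ← h1]
    refine Submodule.span_mono ?_
    rintro _ ⟨_, ⟨w, rfl⟩, rfl⟩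
    exact ⟨U.mkQ w, hψ w⟩
  obtain ⟨w, hw⟩ : ∃ w, w ∉ U := by
    by_contra! hc
    exact hU (eq_top_iff.2 fun x _ => hc x)
  obtain ⟨y, hy0, hy⟩ := aux_fixed hq hqL ψ hψs (aux_inj hq ψ hψs hψspan) (U.mkQ w)
    (fun h0 => hw ((Submodule.Quotient.mk_eq_zero U).1 h0))
  obtain ⟨y, rfl⟩ := U.mkQ_surjective y
  rw [hψ, ← sub_eq_zero, ← map_sub] at hy
  obtain ⟨z, hz, hz'⟩ := hsol _ ((Submodule.Quotient.mk_eq_zero U).1 hy)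
  refine hy0 ((Submodule.Quotient.mk_eq_zero U).2 ?_)
  have : y - z ∈ U := Submodule.subset_span (by
    show φ (y - z) = y - z
    rw [map_sub, sub_eq_sub_iff_sub_eq_sub, ← hz'])
  simpa using add_mem this hz

/-- Lang's theorem for `GL_n` over a separably closed field. -/
theorem aux_lang {L : Type*} [Field L] [IsSepClosed L] (p r : ℕ) [Fact p.Prime] [CharP L p]
    (hr : 0 < r) {n : ℕ} (A : Matrix (Fin n) (Fin n) L) (hA : IsUnit A.det) :
    ∃ P : Matrix (Fin n) (Fin n) L, IsUnit P.det ∧ A * P.map (iterateFrobenius L p r) = P := by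
  classical
  have hp := (Fact.out : p.Prime)
  let φ : (Fin n → L) →+ (Fin n → L) :=
    { toFun := fun x => A.mulVec (fun i => iterateFrobenius L p r (x i))
      map_zero' := by
        have : (fun i => iterateFrobenius L p r ((0 : Fin n → L) i)) = 0 := by ext i; simp
        rw [this, Matrix.mulVec_zero]
      map_add' := fun x y => by
        rw [← Matrix.mulVec_add]
        congr 1
        ext i
        simp }
  have hφ : ∀ x, φ x = A.mulVec (fun i => iterateFrobenius L p r (x i)) := fun x => rfl
  have hsemi : ∀ (c : L) w, φ (c • w) = c ^ (p ^ r) • φ w := by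
    intro c w
    rw [hφ, hφ, ← Matrix.mulVec_smul]
    congr 1
    ext i
    simp [iterateFrobenius_def, mul_pow]
  have hspan : Submodule.span L (Set.range φ) = ⊤ := by
    rw [eq_top_iff]
    intro y _
    have hy : y = A.mulVecLin (A⁻¹.mulVec y) := by
      rw [Matrix.mulVecLin_apply, Matrix.mulVec_mulVec, Matrix.mul_nonsing_inv _ hA, Matrix.one_mulVec]
    rw [hy, pi_eq_sum_univ' (A⁻¹.mulVec y), map_sum]
    refine Submodule.sum_mem _ fun i _ => ?_
    rw [map_smul]
    refine Submodule.smul_mem _ _ (Submodule.subset_span ⟨Pi.single i 1, ?_⟩)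
    rw [hφ, Matrix.mulVecLin_apply]
    congr 1
    ext j
    rcases eq_or_ne j i with rfl | hij
    · simp
    · simp [hij]
  have hq : 2 ≤ p ^ r := hp.two_le.trans (Nat.le_self_pow hr.ne' p)
  have hS := aux_span hq (by simp [hr.ne']) φ hsemi hspan
  obtain ⟨b, hb⟩ : ∃ b : Module.Basis (Fin n) L (Fin n → L), ∀ i, φ (b i) = b i := by
    obtain ⟨s, hs, hs', hl⟩ := exists_linearIndependent L {x | φ x = x}
    let b := Module.Basis.mk hl (by rw [Subtype.range_coe, hs', hS])
    have : Fintype s := FiniteDimensional.fintypeBasisIndex b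
    have hc : Fintype.card s = Fintype.card (Fin n) := by
      rw [← Module.finrank_eq_card_basis b]; simp
    refine ⟨b.reindex (Fintype.equivOfCardEq hc), fun i => ?_⟩
    rw [Module.Basis.reindex_apply, Module.Basis.mk_apply]
    exact hs (Subtype.mem _)
  refine ⟨Matrix.of fun i j => b j i, ?_, ?_⟩
  · have : (Matrix.of fun i j => b j i) = (Pi.basisFun L (Fin n)).toMatrix b := by
      ext i j; simp [Module.Basis.toMatrix_apply]
    rw [this]
    exact (Pi.basisFun L (Fin n)).isUnit_det b
  · ext i j
    exact congrFun (hb j) i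

end Aux

theorem aux_unit (p r n : ℕ) {K V : Type*} [Field K] [ExpChar K p]
    [AddCommGroup V] [Module K V] [FiniteDimensional K V]
    (b : Module.Basis (Fin n) K V)
    (φ : V →+ V) (hφ : IsFrobSemilinear p r K φ)
    (hunit : Function.Bijective (unitMap p r K φ hφ)) :
    IsUnit (b.toMatrix (fun j => φ (b j))).det := by
  have hφ' : ∀ y, φ y = ∑ i, (b.repr y i) ^ p ^ r • φ (b i) := by
    intro y
    conv_lhs => rw [← b.sum_repr y]
    rw [map_sum]
    exact Finset.sum_congr rfl fun i _ => hφ _ _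
  have htop : ⊤ ≤ Submodule.span K (Set.range (fun i => φ (b i))) := by
    intro v _
    obtain ⟨x, rfl⟩ := hunit.2 v
    induction x using TensorProduct.induction_on with
    | zero => rw [map_zero]; exact Submodule.zero_mem _
    | add x y hx hy => rw [map_add]; exact Submodule.add_mem _ (hx trivial) (hy trivial)
    | tmul c m =>
      change (show K from c) • φ m ∈ _
      rw [hφ' m]
      exact Submodule.smul_mem _ _ (Submodule.sum_mem _ fun i _ =>
        Submodule.smul_mem _ _ (Submodule.subset_span ⟨i, rfl⟩))
  have hli : LinearIndependent K (fun i => φ (b i)) :=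
    linearIndependent_of_top_le_span_of_card_eq_finrank htop
      (Module.finrank_eq_card_basis b).symm
  have := b.isUnit_det (Module.Basis.mk hli htop)
  rw [Module.Basis.det_apply] at this
  rwa [Module.Basis.coe_mk] at this

/-- For a finite-dimensional unit `K[F^r]`-module `(V, φ)` of dimension
`n`, there is a finite separable extension `K'/K` inside `K^sep` such that
`K' ⊗_K V`, with its induced endomorphism, is isomorphic as a unit `K'[F^r]`-module to
`(K')^{⊕n}` with the coordinatewise `q`-power structure. -/
theorem statement2 (p r : ℕ) [Fact p.Prime] (hr : 0 < r)
    (K : Type*) [Field K] [CharP K p]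
    (Ksep : Type*) [Field Ksep] [Algebra K Ksep] [IsSepClosure K Ksep]
    (V : Type*) [AddCommGroup V] [Module K V] [FiniteDimensional K V]
    (n : ℕ) (hn : Module.finrank K V = n)
    (φ : V →+ V) (hφ : IsFrobSemilinear p r K φ)
    (hunit : Function.Bijective (unitMap p r K φ hφ)) :
    ∃ K' : IntermediateField K Ksep, FiniteDimensional K K' ∧
      ∃ φ' : K' ⊗[K] V →+ K' ⊗[K] V,
        (∀ (c : K') (v : V), φ' (c ⊗ₜ[K] v) = (c ^ p ^ r) ⊗ₜ[K] φ v) ∧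
        ∃ e : (K' ⊗[K] V) ≃ₗ[K'] (Fin n → K'),
          ∀ x, e (φ' x) = fun i => (e x i) ^ p ^ r := by
  classical
  have : CharP Ksep p := charP_of_injective_algebraMap (algebraMap K Ksep).injective p
  have : IsSepClosed Ksep := IsSepClosure.sep_closed K
  have : Algebra.IsSeparable K Ksep := IsSepClosure.separable
  let b : Module.Basis (Fin n) K V := Module.finBasisOfFinrankEq K V hn
  let A : Matrix (Fin n) (Fin n) K := b.toMatrix (fun j => φ (b j))
  have hA : IsUnit A.det := aux_unit p r n b φ hφ hunit
  obtain ⟨P, hP, hAP⟩ := aux_lang p r hr (A.map (algebraMap K Ksep)) (by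
    have := hA.map (algebraMap K Ksep)
    rwa [RingHom.map_det] at this)
  let S : Set Ksep := Set.range fun ij : Fin n × Fin n => P ij.1 ij.2
  have hS : S.Finite := Set.finite_range _
  let K' : IntermediateField K Ksep := IntermediateField.adjoin K S
  have hfin : FiniteDimensional K K' :=
    IntermediateField.finiteDimensional_adjoin (S := S) (by
      have := hS.to_subtype
      exact fun x _ => (Algebra.IsSeparable.isSeparable K x).isIntegral)
  have : CharP K' p := charP_of_injective_algebraMap (algebraMap K K').injective p
  let P' : Matrix (Fin n) (Fin n) K' := Matrix.of fun i j =>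
    ⟨P i j, IntermediateField.subset_adjoin K S ⟨(i, j), rfl⟩⟩
  have hPP : P'.map (algebraMap K' Ksep) = P := rfl
  have hP' : IsUnit P'.det := by
    rw [isUnit_iff_ne_zero] at hP ⊢
    intro h0
    apply hP
    rw [← hPP]
    have := RingHom.map_det (algebraMap K' Ksep) P'
    rw [h0, map_zero] at this
    exact this.symm
  have hAP' : A.map (algebraMap K K') * P'.map (iterateFrobenius K' p r) = P' := by
    have hinj : Function.Injective (fun M : Matrix (Fin n) (Fin n) K' =>
        M.map (algebraMap K' Ksep)) := Matrix.map_injective (algebraMap K' Ksep).injective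
    apply hinj
    change (A.map (algebraMap K K') * P'.map (iterateFrobenius K' p r)).map (algebraMap K' Ksep)
      = P
    rw [Matrix.map_mul, ← hAP]
    congr 1
  have hunitP : IsUnit P' := (Matrix.isUnit_iff_isUnit_det P').2 hP'
  have : Invertible P' := hunitP.invertible
  let B : Module.Basis (Fin n) K' (K' ⊗[K] V) := Algebra.TensorProduct.basis K' b
  let e : (K' ⊗[K] V) ≃ₗ[K'] (Fin n → K') :=
    B.equivFun ≪≫ₗ (Matrix.toLinearEquiv' P' this).symm
  have hPe : ∀ x, P'.mulVec (e x) = B.equivFun x := fun x =>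
    (Matrix.toLinearEquiv' P' this).apply_symm_apply (B.equivFun x)
  have hPinj : Function.Injective P'.mulVec := (Matrix.toLinearEquiv' P' this).injective
  let F := iterateFrobenius K' p r
  have hF : ∀ x, F x = x ^ p ^ r := fun x => iterateFrobenius_def p r x
  let Φ : (Fin n → K') →+ (Fin n → K') :=
    { toFun := fun x i => F (x i)
      map_zero' := by ext i; simp
      map_add' := fun x y => by ext i; simp }
  refine ⟨K', hfin, (e.symm.toLinearMap.toAddMonoidHom.comp Φ).comp e.toLinearMap.toAddMonoidHom,
    ?_, e, ?_⟩
  · intro c v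
    change e.symm (fun i => F (e (c ⊗ₜ[K] v) i)) = _
    rw [LinearEquiv.symm_apply_eq]
    apply hPinj
    rw [hPe]
    have hB : ∀ (c : K') (v : V), B.equivFun (c ⊗ₜ[K] v)
        = fun i => c * algebraMap K K' (b.repr v i) := by
      intro c v
      ext i
      simp [B, Algebra.TensorProduct.basis_repr_tmul, Algebra.smul_def, mul_comm]
    have h1 : (fun i => F (B.equivFun (c ⊗ₜ[K] v) i))
        = (P'.map F).mulVec (fun i => F (e (c ⊗ₜ[K] v) i)) := by
      rw [← hPe]
      ext i
      simp [Matrix.mulVec, dotProduct, map_sum]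
    conv_lhs => rw [← hAP']
    rw [← Matrix.mulVec_mulVec, ← h1, hB, hB]
    have hφv : ∀ i, b.repr (φ v) i = ∑ j, A i j * (b.repr v j) ^ p ^ r := by
      intro i
      conv_lhs => rw [← b.sum_repr v]
      rw [map_sum, map_sum, Finsupp.finsetSum_apply]
      refine Finset.sum_congr rfl fun j _ => ?_
      rw [hφ, map_smul, Finsupp.smul_apply, smul_eq_mul, mul_comm]
      rfl
    ext i
    rw [hφv]
    simp only [Matrix.mulVec, dotProduct, Matrix.map_apply, hF, mul_pow, map_sum, map_mul,
      map_pow, Finset.mul_sum]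
    congr 1
    refine Finset.sum_congr rfl fun j _ => ?_
    ring
  · intro x
    change e (e.symm (fun i => F (e x i))) = _
    rw [LinearEquiv.apply_symm_apply]
    ext i
    rw [hF]
end

section
/- Let A be a Henselian local ring of characteristic p with maximal ideal m whose residue field A/m is algebraically closed, and let c = (c_{ij}) be an n×n matrix with entries in A which is invertible over A. Then reduction modulo m induces a bijection between the solution sets {(a_1, …, a_n) ∈ Aⁿ : a_k^q = Σ_{ℓ=1}^n a_ℓ·c_{ℓk} for all k} and {(ā_1, …, ā_n) ∈ (A/m)ⁿ : ā_k^q = Σ_{ℓ=1}^n ā_ℓ·c̄_{ℓk} for all k}, where c̄_{ℓk} is the image of c_{ℓk} in A/m. -/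
/-!
Common definitions: unit `R[F^r]`-modules (Emerton–Kisin / Lyubeznik style), following
the conventions of the paper.  Throughout, `q = p ^ r` and for a commutative ring `R` of
(exponential) characteristic `p`, a unit `R[F^r]`-module is an `R`-module `M` together with
an additive `q`-semilinear map `φ : M → M` whose induced structural map
`R ⊗_{Frob} M → M`, `c ⊗ m ↦ c • φ m`, is bijective.
-/

open scoped TensorProduct

section Aux

open IsLocalRing

open Polynomial in
theorem etale_lift_aux {A : Type*} [CommRing A] [HenselianLocalRing A]
    {B : Type*} [CommRing B] [Algebra A B] [Algebra.Etale A B]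
    (φ : B →ₐ[A] ResidueField A) :
    ∃ ψ : B →ₐ[A] A, ∀ b, residue A (ψ b) = φ b := by
  have hprime : (RingHom.ker φ).IsPrime := RingHom.ker_isPrime φ
  obtain ⟨f, hf, hS⟩ := Algebra.IsEtaleAt.exists_isStandardEtale (R := A) (RingHom.ker φ)
  have hf' : φ f ≠ 0 := hf
  let φ' : Localization.Away f →ₐ[A] ResidueField A :=
    IsLocalization.liftAlgHom (M := Submonoid.powers f) (f := φ) (by
      rintro ⟨_, n, rfl⟩
      simpa using (isUnit_iff_ne_zero.mpr hf').pow n)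
  have hφ' : ∀ b, φ' (algebraMap B _ b) = φ b := fun b => by
    simp [φ']
  obtain ⟨P⟩ := hS.nonempty_standardEtalePresentation
  have hx := P.hasMap.map φ'
  have hH : HenselianLocalRing A ↔ ∀ f : A[X], f.Monic → ∀ a₀ : ResidueField A, aeval a₀ f = 0 →
      aeval a₀ (derivative f) ≠ 0 → ∃ a : A, f.IsRoot a ∧ residue A a = a₀ :=
    (HenselianLocalRing.TFAE A).out 0 1
  obtain ⟨a, ha, hax⟩ := hH.mp ‹_› P.f P.monic_f (φ' P.x) hx.1
    hx.isUnit_derivative_f.ne_zero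
  have haeval : ∀ g : A[X], residue A (aeval a g) = aeval (φ' P.x) g := fun g => by
    rw [← hax]
    exact (aeval_algHom_apply (Algebra.ofId A (ResidueField A)) a g).symm
  have hm : P.HasMap a := by
    refine ⟨by simpa [IsRoot.def] using ha, ?_⟩
    rw [← residue_ne_zero_iff_isUnit, haeval]
    exact hx.2.ne_zero
  let ψ' : Localization.Away f →ₐ[A] A := (P.lift a hm).comp P.equivRing.toAlgHom
  have hψ' : (Algebra.ofId A (ResidueField A)).comp ψ' = φ' := by
    apply P.hom_ext
    have : ψ' P.x = a := by simp [ψ']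
    rw [AlgHom.comp_apply, this]
    exact hax
  refine ⟨ψ'.comp (IsScalarTower.toAlgHom A B _), fun b => ?_⟩
  rw [← hφ', ← hψ']
  rfl

open MvPolynomial in
theorem etale_sys_aux (p r : ℕ) [Fact p.Prime] (hr : 0 < r)
    (A : Type*) [CommRing A] [CharP A p]
    (n : ℕ) (c : Matrix (Fin n) (Fin n) A) (hc : IsUnit c) :
    Algebra.Etale A (MvPolynomial (Fin n) A ⧸ Ideal.span (Set.range fun j : Fin n =>
      (X j ^ p ^ r - ∑ l, X l * C (c l j) : MvPolynomial (Fin n) A))) := by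
  let v : Fin n → MvPolynomial (Fin n) A := fun j => X j ^ p ^ r - ∑ l, X l * C (c l j)
  let P : Algebra.PreSubmersivePresentation A (MvPolynomial (Fin n) A ⧸ Ideal.span (Set.range v))
    (Fin n) (Fin n) := .naive (v := v) id Function.injective_id
  have hJ : P.jacobiMatrix = - (C : A →+* MvPolynomial (Fin n) A).mapMatrix c := by
    ext1 i j
    rw [Algebra.PreSubmersivePresentation.jacobiMatrix_naive]
    have hq : ((p : MvPolynomial (Fin n) A)) = 0 := CharP.cast_eq_zero _ p
    simp [v, Derivation.leibniz_pow, hq, hr.ne', pderiv_X, Pi.single_apply]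
  have hu : IsUnit P.jacobian := by
    rw [Algebra.PreSubmersivePresentation.jacobian_eq_jacobiMatrix_det, hJ]
    apply IsUnit.map
    rw [← Matrix.isUnit_iff_isUnit_det]
    exact (hc.map _).neg
  let P' : Algebra.SubmersivePresentation A (MvPolynomial (Fin n) A ⧸ Ideal.span (Set.range v))
    (Fin n) (Fin n) := ⟨P, hu⟩
  have := P'.isStandardSmoothOfRelativeDimension (n := 0)
    (by simp [Algebra.Presentation.dimension])
  change Algebra.Etale A (MvPolynomial (Fin n) A ⧸ Ideal.span (Set.range v))
  infer_instance

theorem inj_aux (p r : ℕ) [Fact p.Prime] (hr : 0 < r)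
    (A : Type*) [CommRing A] [IsLocalRing A]
    (n : ℕ) (c : Matrix (Fin n) (Fin n) A) (hc : IsUnit c) (b : Fin n → A)
    (hb : ∀ j, b j ^ p ^ r = ∑ l, b l * c l j) (hm : ∀ j, b j ∈ maximalIdeal A) : b = 0 := by
  let I : Ideal A := Ideal.span (Set.range b)
  have hbI : ∀ j, b j ∈ I := fun j => Ideal.subset_span ⟨j, rfl⟩
  have hq : 2 ≤ p ^ r := (Fact.out : p.Prime).two_le.trans (Nat.le_self_pow hr.ne' p)
  have hpow : ∀ j, b j ^ p ^ r ∈ maximalIdeal A * I := fun j => by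
    obtain ⟨k, hk⟩ := Nat.exists_eq_add_of_le hq
    rw [hk, pow_add, pow_two]
    exact Ideal.mul_mem_right _ _ (Ideal.mul_mem_mul (hm j) (hbI j))
  have hI : I ≤ maximalIdeal A • I := by
    refine Ideal.span_le.mpr ?_
    rintro _ ⟨j, rfl⟩
    obtain ⟨d, hd⟩ := hc.exists_right_inv
    have h1 : Matrix.vecMul b c = fun j => b j ^ p ^ r := by
      ext j; rw [hb]; rfl
    have h2 : b = Matrix.vecMul (fun j => b j ^ p ^ r) d := by
      rw [← h1, Matrix.vecMul_vecMul, hd, Matrix.vecMul_one]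
    rw [h2]
    change ∑ l, b l ^ p ^ r * d l j ∈ maximalIdeal A * I
    exact Ideal.sum_mem _ fun l _ => Ideal.mul_mem_right _ _ (hpow l)
  have h0 : I = ⊥ := Submodule.eq_bot_of_le_smul_of_le_jacobson_bot (maximalIdeal A) I
    ⟨(Set.finite_range b).toFinset, by simp [I]⟩ hI (maximalIdeal_le_jacobson _)
  ext j
  have := hbI j
  rw [h0] at this
  simpa using this

end Aux

/-- Let `A` be a Henselian local ring of characteristic `p` with
algebraically closed residue field, and let `c` be an invertible `n × n` matrix over
`A`.  Then reduction modulo the maximal ideal is a bijection between the solutions in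
`Aⁿ` and in `(A/m)ⁿ` of the system `a_k ^ q = ∑ ℓ, a_ℓ · c_{ℓ k}`. -/
theorem statement6 (p r : ℕ) [Fact p.Prime] (hr : 0 < r)
    (A : Type*) [CommRing A] [HenselianLocalRing A] [CharP A p]
    [IsAlgClosed (IsLocalRing.ResidueField A)]
    (n : ℕ) (c : Matrix (Fin n) (Fin n) A) (hc : IsUnit c) :
    Set.BijOn (fun (a : Fin n → A) (i : Fin n) => IsLocalRing.residue A (a i))
      {a : Fin n → A | ∀ j, a j ^ p ^ r = ∑ l, a l * c l j}
      {abar : Fin n → IsLocalRing.ResidueField A |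
        ∀ j, abar j ^ p ^ r = ∑ l, abar l * IsLocalRing.residue A (c l j)} := by
  refine ⟨?_, ?_, ?_⟩
  · intro a ha j
    have := congrArg (IsLocalRing.residue A) (ha j)
    simpa using this
  · intro a ha a' ha' h
    have : ExpChar A p := ExpChar.prime Fact.out
    have := inj_aux p r hr A n c hc (a - a') (fun j => by
      simp only [Pi.sub_apply, sub_pow_expChar_pow, sub_mul, Finset.sum_sub_distrib]
      rw [ha j, ha' j]) (fun j => by
      rw [← IsLocalRing.residue_eq_zero_iff]
      simpa [sub_eq_zero] using congrFun h j)
    exact sub_eq_zero.mp this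
  · intro abar habar
    have := etale_sys_aux p r hr A n c hc
    let φ := Ideal.Quotient.liftₐ (Ideal.span (Set.range fun j : Fin n =>
      (MvPolynomial.X j ^ p ^ r - ∑ l, MvPolynomial.X l * MvPolynomial.C (c l j) :
        MvPolynomial (Fin n) A)))
      (MvPolynomial.aeval abar) (by
        intro x hx
        rw [← RingHom.mem_ker]
        revert x
        rw [← SetLike.le_def, Ideal.span_le]
        rintro _ ⟨j, rfl⟩
        have := habar j
        simp [RingHom.mem_ker, this])
    obtain ⟨ψ, hψ⟩ := etale_lift_aux φ
    refine ⟨fun j => ψ (Ideal.Quotient.mk _ (MvPolynomial.X j)), fun j => ?_, ?_⟩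
    · have h0 : Ideal.Quotient.mk (Ideal.span (Set.range fun j : Fin n =>
        (MvPolynomial.X j ^ p ^ r - ∑ l, MvPolynomial.X l * MvPolynomial.C (c l j) :
        MvPolynomial (Fin n) A))) (MvPolynomial.X j ^ p ^ r -
          ∑ l, MvPolynomial.X l * MvPolynomial.C (c l j)) = 0 :=
        Ideal.Quotient.eq_zero_iff_mem.mpr (Ideal.subset_span ⟨j, rfl⟩)
      have h1 := congrArg ψ h0
      have h2 : ∀ x : A, ψ (Ideal.Quotient.mk _ (MvPolynomial.C x)) = x :=
        fun x => ψ.commutes x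
      simp only [map_sub, map_pow, map_sum, map_mul, map_zero, h2] at h1
      exact sub_eq_zero.mp h1
    · ext j
      change IsLocalRing.residue A (ψ _) = _
      rw [hψ]
      exact MvPolynomial.aeval_X abar j
end

section
/- Let L be a field of characteristic p. A unit L[F^r]-module (V, φ) is finitely generated as a left L[F^r]-module (i.e., there is a finite subset S ⊆ V such that the only φ-stable L-subspace of V containing S is V itself) if and only if V is finite-dimensional as an L-vector space. -/
/-!
Common definitions: unit `R[F^r]`-modules (Emerton–Kisin / Lyubeznik style), following
the conventions of the paper.  Throughout, `q = p ^ r` and for a commutative ring `R` of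
(exponential) characteristic `p`, a unit `R[F^r]`-module is an `R`-module `M` together with
an additive `q`-semilinear map `φ : M → M` whose induced structural map
`R ⊗_{Frob} M → M`, `c ⊗ m ↦ c • φ m`, is bijective.
-/

open scoped TensorProduct

/-- The submodule spanned by the image of a submodule under `φ`. -/
def frobSpan (L : Type*) [Field L] {V : Type*} [AddCommGroup V] [Module L V]
    (φ : V →+ V) (W : Submodule L V) : Submodule L V :=
  Submodule.span L (⇑φ '' (W : Set V))

theorem frobSpan_mono {L : Type*} [Field L] {V : Type*} [AddCommGroup V] [Module L V]
    (φ : V →+ V) : Monotone (frobSpan L φ) := fun _ _ h =>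
  Submodule.span_mono (Set.image_mono h)

theorem frobSpan_basis (p r : ℕ) {L : Type*} [Field L] [ExpChar L p]
    {V : Type*} [AddCommGroup V] [Module L V]
    (φ : V →+ V) (hφ : IsFrobSemilinear p r L φ) (W : Submodule L V) [FiniteDimensional L W] :
    FiniteDimensional L (frobSpan L φ W) ∧
      Module.finrank L (frobSpan L φ W) ≤ Module.finrank L W := by
  let b := Module.finBasis L W
  have key : frobSpan L φ W =
      Submodule.span L (Set.range (fun i => φ (b i : V))) := by
    apply le_antisymm
    · refine Submodule.span_le.2 ?_
      rintro _ ⟨x, hx, rfl⟩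
      have h := b.sum_repr ⟨x, hx⟩
      have h2 : x = ∑ i, b.repr ⟨x, hx⟩ i • (b i : V) := by
        have h3 := congrArg W.subtype h
        rw [map_sum] at h3
        exact h3.symm
      rw [h2, map_sum]
      refine Submodule.sum_mem _ fun i _ => ?_
      rw [hφ]
      exact Submodule.smul_mem _ _ (Submodule.subset_span ⟨i, rfl⟩)
    · refine Submodule.span_le.2 ?_
      rintro _ ⟨i, rfl⟩
      exact Submodule.subset_span ⟨_, (b i).2, rfl⟩
  rw [key]
  refine ⟨FiniteDimensional.span_of_finite L (Set.finite_range _), ?_⟩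
  have := finrank_range_le_card (R := L) (fun i => φ (b i : V))
  simpa [Set.finrank] using this

/-- The increasing chain of subspaces generated by `W` under `φ`. -/
def frobChain (L : Type*) [Field L] {V : Type*} [AddCommGroup V] [Module L V]
    (φ : V →+ V) (W : Submodule L V) : ℕ → Submodule L V
  | 0 => W
  | n + 1 => W ⊔ frobSpan L φ (frobChain L φ W n)

theorem frobChain_mono {L : Type*} [Field L] {V : Type*} [AddCommGroup V] [Module L V]
    (φ : V →+ V) (W : Submodule L V) : Monotone (frobChain L φ W) := by
  refine monotone_nat_of_le_succ fun n => ?_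
  induction n with
  | zero => exact le_sup_left
  | succ n ih => exact sup_le_sup le_rfl (frobSpan_mono φ ih)

/-- A unit `L[F^r]`-module over a field `L` of characteristic `p` is
finitely generated as a left `L[F^r]`-module if and only if it is finite-dimensional
over `L`. -/
theorem statement7 (p r : ℕ) [Fact p.Prime] (hr : 0 < r)
    (L : Type*) [Field L] [CharP L p]
    (V : Type*) [AddCommGroup V] [Module L V]
    (φ : V →+ V) (hφ : IsFrobSemilinear p r L φ)
    (hunit : Function.Bijective (unitMap p r L φ hφ)) :
    IsFGFMod L φ ↔ FiniteDimensional L V := by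
  classical
  constructor
  · rintro ⟨s, hs⟩
    set W := Submodule.span L (s : Set V) with hW
    have hWfg : W.FG := ⟨s, rfl⟩
    have hmono := frobChain_mono φ W
    have hfd : ∀ n, FiniteDimensional L (frobChain L φ W n) := by
      intro n
      induction n with
      | zero => exact FiniteDimensional.span_finset L s
      | succ n ih =>
        have h1 := (frobSpan_basis p r φ hφ (frobChain L φ W n)).1
        have h2 : FiniteDimensional L W := FiniteDimensional.span_finset L s
        exact Submodule.finiteDimensional_sup _ _
    have hstep : ∀ n, ∀ x ∈ frobChain L φ W n, φ x ∈ frobChain L φ W (n + 1) := fun n x hx =>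
      (le_sup_right : _ ≤ W ⊔ frobSpan L φ (frobChain L φ W n))
        (Submodule.subset_span ⟨x, hx, rfl⟩)
    have htop : (⨆ n, frobChain L φ W n) = ⊤ := by
      apply hs
      · intro x hx
        obtain ⟨n, hn⟩ := (Submodule.mem_iSup_of_directed _ hmono.directed_le).1 hx
        exact Submodule.mem_iSup_of_mem (n + 1) (hstep n x hn)
      · exact fun x hx => Submodule.mem_iSup_of_mem 0 (Submodule.subset_span hx)
    have hmono2 : Monotone (fun n => frobSpan L φ (frobChain L φ W n)) :=
      (frobSpan_mono φ).comp hmono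
    have hF : W ≤ ⨆ n, frobSpan L φ (frobChain L φ W n) := by
      intro x hxW
      clear hxW
      obtain ⟨t, rfl⟩ := hunit.2 x
      induction t using TensorProduct.induction_on with
      | zero => rw [map_zero]; exact Submodule.zero_mem _
      | add a b ha hb => rw [map_add]; exact Submodule.add_mem _ ha hb
      | tmul c m =>
        have hm : m ∈ ⨆ n, frobChain L φ W n := htop ▸ Submodule.mem_top
        obtain ⟨n, hn⟩ := (Submodule.mem_iSup_of_directed _ hmono.directed_le).1 hm
        refine Submodule.mem_iSup_of_mem n ?_
        change (show L from c) • φ m ∈ _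
        exact Submodule.smul_mem _ _ (Submodule.subset_span ⟨m, hn, rfl⟩)
    obtain ⟨n, hn⟩ : ∃ n, W ≤ frobSpan L φ (frobChain L φ W n) := by
      have hx : ∀ x ∈ s, ∃ n, x ∈ frobSpan L φ (frobChain L φ W n) := fun x hx =>
        (Submodule.mem_iSup_of_directed _ hmono2.directed_le).1 (hF (Submodule.subset_span hx))
      choose! f hf using hx
      refine ⟨s.sup f, Submodule.span_le.2 fun x hx => ?_⟩
      exact hmono2 (Finset.le_sup (f := f) hx) (hf x hx)
    have hsucc : frobChain L φ W (n + 1) = frobSpan L φ (frobChain L φ W n) :=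
      sup_eq_right.2 hn
    have := hfd n
    have := hfd (n + 1)
    have heq : frobChain L φ W n = frobChain L φ W (n + 1) := by
      apply Submodule.eq_of_le_of_finrank_le (hmono n.le_succ)
      rw [hsucc]
      exact (frobSpan_basis p r φ hφ _).2
    have hfin : frobChain L φ W n = ⊤ := by
      apply hs
      · intro x hx
        rw [heq]
        exact hstep n x hx
      · exact fun x hx => hmono n.zero_le (Submodule.subset_span hx)
    have h3 := hfd n
    rw [hfin] at h3
    exact Module.finite_def.2 ((Module.Finite.iff_fg).1 h3)
  · intro h
    obtain ⟨s, hs⟩ := Module.finite_def.1 h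
    refine ⟨s, fun N _ hN => ?_⟩
    rw [eq_top_iff, ← hs]
    exact Submodule.span_le.2 hN
end

section
/- Let A be a Henselian local ring of characteristic p whose residue field is algebraically closed. Then for every n×n matrix (a_{ij}) with entries in A and every (b_1, …, b_n) ∈ Aⁿ there exists (b'_1, …, b'_n) ∈ Aⁿ such that b'_i − Σ_{j=1}^n (b'_j)^q · a_{ji} = b_i for all i = 1, …, n. -/
/-!
Common definitions: unit `R[F^r]`-modules (Emerton–Kisin / Lyubeznik style), following
the conventions of the paper.  Throughout, `q = p ^ r` and for a commutative ring `R` of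
(exponential) characteristic `p`, a unit `R[F^r]`-module is an `R`-module `M` together with
an additive `q`-semilinear map `φ : M → M` whose induced structural map
`R ⊗_{Frob} M → M`, `c ⊗ m ↦ c • φ m`, is bijective.
-/

open scoped TensorProduct

open Polynomial in
/-- Residual solution: a `q`-semilinear `1 - φ` is surjective over an algebraically closed field. -/
theorem residual_solution (p r : ℕ) [Fact p.Prime] (hr : 0 < r)
    (k : Type*) [Field k] [CharP k p] [IsAlgClosed k] {V : Type*} [AddCommGroup V] [Module k V]
    [Module.Finite k V] (φ : V →+ V) (hφ : ∀ (c : k) (v : V), φ (c • v) = c ^ p ^ r • φ v)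
    (b : V) : ∃ x : V, x - φ x = b := by
  classical
  let e : ℕ → V := fun i => φ^[i] b
  have he : ∀ i, φ (e i) = e (i + 1) := fun i => (Function.iterate_succ_apply' φ i b).symm
  let W : ℕ →o Submodule k V :=
    { toFun := fun m => Submodule.span k (e '' (Finset.range m : Finset ℕ))
      monotone' := fun m m' h => Submodule.span_mono (Set.image_mono (by
        intro i hi
        simp only [Finset.coe_range, Set.mem_Iio] at hi ⊢
        omega)) }
  obtain ⟨m, hm⟩ := WellFoundedGT.monotone_chain_condition W
  have h1 : e m ∈ W m := by
    rw [hm (m + 1) (Nat.le_succ m)]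
    exact Submodule.subset_span ⟨m, by simp, rfl⟩
  obtain ⟨c, hc⟩ : ∃ c : ℕ → k, ∑ i ∈ Finset.range m, c i • e i = e m := by
    obtain ⟨c, hc⟩ := (Submodule.mem_span_image_finset_iff_exists_fun k).1 h1
    refine ⟨fun i => if h : i ∈ Finset.range m then c ⟨i, h⟩ else 0, ?_⟩
    rw [← hc, ← Finset.sum_coe_sort]
    exact Finset.sum_congr rfl fun i _ => by
      simp only [dif_pos i.2]
  rcases m with _ | m
  · refine ⟨0, ?_⟩
    have : b = 0 := by simpa [e] using hc.symm
    simp [this]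
  let Y : ℕ → k[X] := fun i => Nat.rec (1 + C (c 0) * X ^ p ^ r)
    (fun i Yi => Yi ^ p ^ r + C (c (i + 1)) * X ^ p ^ r) i
  have hY0 : Y 0 = 1 + C (c 0) * X ^ p ^ r := rfl
  have hYs : ∀ i, Y (i + 1) = Y i ^ p ^ r + C (c (i + 1)) * X ^ p ^ r := fun i => rfl
  have hq : ((p ^ r : ℕ) : k[X]) = 0 := by
    rw [Nat.cast_pow, CharP.cast_eq_zero, zero_pow hr.ne']
  have hd : ∀ i, derivative (Y i) = 0 := by
    intro i
    cases i with
    | zero =>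
      rw [hY0, derivative_add, derivative_one, derivative_C_mul, derivative_pow, C_eq_natCast, hq]
      simp
    | succ i =>
      rw [hYs, derivative_add, derivative_C_mul, derivative_pow, derivative_pow, C_eq_natCast, hq]
      simp
  obtain ⟨t, ht⟩ : ∃ t, Polynomial.IsRoot (Y m - X) t := by
    apply IsAlgClosed.exists_root
    intro h
    have h2 := congrArg derivative (eq_C_of_degree_eq_zero h)
    rw [derivative_sub, hd, derivative_X, derivative_C] at h2
    simp at h2
  have ht' : (Y m).eval t = t := by
    simpa [Polynomial.IsRoot, sub_eq_zero] using ht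
  refine ⟨∑ i ∈ Finset.range (m + 1), (Y i).eval t • e i, ?_⟩
  have hφx : φ (∑ i ∈ Finset.range (m + 1), (Y i).eval t • e i) =
      ∑ i ∈ Finset.range (m + 1), (Y i).eval t ^ p ^ r • e (i + 1) := by
    simp [map_sum, hφ, he]
  have hs : ∀ i, (Y i).eval t ^ p ^ r • e (i + 1) =
      (Y (i + 1)).eval t • e (i + 1) - t ^ p ^ r • (c (i + 1) • e (i + 1)) := by
    intro i
    rw [hYs, smul_smul, ← sub_smul]
    congr 1
    rw [eval_add, eval_pow, eval_mul, eval_C, eval_pow, eval_X]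
    ring
  have h0 : (Y 0).eval t • e 0 = e 0 + t ^ p ^ r • (c 0 • e 0) := by
    rw [hY0, smul_smul]
    rw [eval_add, eval_one, eval_mul, eval_C, eval_pow, eval_X, add_smul, one_smul, mul_comm]
  rw [hφx, Finset.sum_range_succ (fun i => (Y i).eval t ^ p ^ r • e (i + 1)), ht',
    Finset.sum_congr rfl (fun i _ => hs i), Finset.sum_sub_distrib, ← Finset.smul_sum,
    ← hc, Finset.sum_range_succ' (fun i => (Y i).eval t • e i),
    Finset.sum_range_succ' (fun i => c i • e i), h0, smul_add]
  have : e 0 = b := rfl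
  rw [this]
  abel

open Polynomial in
/-- Etale algebras over a Henselian local ring with a rational point in the residue field
have a section. -/
theorem exists_section_of_etale (A : Type*) [CommRing A] [HenselianLocalRing A]
    (S : Type*) [CommRing S] [Algebra A S] [Algebra.Etale A S]
    (ψ : S →ₐ[A] IsLocalRing.ResidueField A) : Nonempty (S →ₐ[A] A) := by
  let Q := RingHom.ker ψ
  have : Q.IsPrime := RingHom.ker_isPrime ψ
  obtain ⟨f, hf, hS⟩ := Algebra.IsEtaleAt.exists_isStandardEtale (R := A) Q
  obtain ⟨⟨P⟩⟩ := hS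
  have hfu : IsUnit (ψ f) := isUnit_iff_ne_zero.2 hf
  let ψ' : Localization.Away f →ₐ[A] IsLocalRing.ResidueField A :=
    IsLocalization.Away.liftAlgHom f (f := ψ) hfu
  have hx := P.hasMap.map ψ'
  have hens : ∀ f : A[X], f.Monic → ∀ a₀ : IsLocalRing.ResidueField A, aeval a₀ f = 0 →
      aeval a₀ (derivative f) ≠ 0 → ∃ a : A, f.IsRoot a ∧ IsLocalRing.residue A a = a₀ :=
    ((HenselianLocalRing.TFAE A).out 0 1).1 ‹_›
  obtain ⟨a, ha, ha'⟩ := hens P.f P.monic_f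
    (ψ' P.x) hx.1 hx.isUnit_derivative_f.ne_zero
  have hmap : P.P.HasMap a := by
    refine ⟨by simpa [Polynomial.IsRoot] using ha, ?_⟩
    have := hx.2
    rw [← ha', ← IsLocalRing.ResidueField.algebraMap_eq, aeval_algebraMap_apply] at this
    exact IsUnit.of_map (IsLocalRing.residue A) _ this
  exact ⟨((P.P.lift a hmap).comp P.equivRing.toAlgHom).comp (IsScalarTower.toAlgHom A S _)⟩

theorem frob_pow_eq (p r : ℕ) [Fact p.Prime] (hr : 0 < r) {S : Type*} [CommRing S] [CharP S p]
    (I : Ideal S) (hI : I ^ 2 = ⊥) (x y : S) (h : x - y ∈ I) : x ^ p ^ r = y ^ p ^ r := by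
  have h2 : (x - y) ^ 2 = 0 := by
    have := Ideal.pow_mem_pow h 2
    rwa [hI, Ideal.mem_bot] at this
  have h3 : 2 ≤ p ^ r := (Fact.out : p.Prime).two_le.trans (Nat.le_self_pow hr.ne' p)
  have h4 : (x - y) ^ p ^ r = 0 := pow_eq_zero_of_le h3 h2
  rwa [sub_pow_char_pow, sub_eq_zero] at h4

open MvPolynomial in
/-- The defining ideal. -/
noncomputable def sysIdeal {A : Type*} [CommRing A] (q n : ℕ) (a : Matrix (Fin n) (Fin n) A)
    (b : Fin n → A) : Ideal (MvPolynomial (Fin n) A) :=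
  Ideal.span (Set.range fun i => X i - ∑ j, X j ^ q * C (a j i) - C (b i))

open MvPolynomial in
theorem sys_of_hom {A : Type*} [CommRing A] {q n : ℕ} {a : Matrix (Fin n) (Fin n) A}
    {b : Fin n → A} {S : Type*} [CommRing S] [Algebra A S]
    (f : (MvPolynomial (Fin n) A ⧸ sysIdeal q n a b) →ₐ[A] S) (i : Fin n) :
    f (Ideal.Quotient.mk _ (X i)) - ∑ j, f (Ideal.Quotient.mk _ (X j)) ^ q * algebraMap A S (a j i)
      = algebraMap A S (b i) := by
  have h : Ideal.Quotient.mkₐ A (sysIdeal q n a b)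
      (X i - ∑ j, X j ^ q * C (a j i) - C (b i)) = 0 :=
    Ideal.Quotient.eq_zero_iff_mem.2 (Ideal.subset_span ⟨i, rfl⟩)
  have h2 := congrArg f h
  rw [← MvPolynomial.algebraMap_eq] at h2
  simp only [map_sub, map_sum, map_mul, map_pow, AlgHom.commutes, map_zero] at h2
  exact sub_eq_zero.1 h2

open MvPolynomial in
theorem hom_of_sys {A : Type*} [CommRing A] {q n : ℕ} {a : Matrix (Fin n) (Fin n) A}
    {b : Fin n → A} {S : Type*} [CommRing S] [Algebra A S] (x : Fin n → S)
    (hx : ∀ i, x i - ∑ j, x j ^ q * algebraMap A S (a j i) = algebraMap A S (b i)) :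
    ∃ f : (MvPolynomial (Fin n) A ⧸ sysIdeal q n a b) →ₐ[A] S,
      ∀ i, f (Ideal.Quotient.mk _ (X i)) = x i := by
  have hle : sysIdeal q n a b ≤ RingHom.ker (aeval x : MvPolynomial (Fin n) A →ₐ[A] S) := by
    rw [sysIdeal, Ideal.span_le]
    rintro _ ⟨i, rfl⟩
    simp [hx]
  exact ⟨Ideal.Quotient.liftₐ _ (aeval x) (fun c hc => RingHom.mem_ker.1 (hle hc)),
    fun i => (Ideal.Quotient.liftₐ_apply _ _ _ _).trans
      ((Ideal.Quotient.lift_mk _ _ _).trans (aeval_X x i))⟩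

open MvPolynomial in
theorem sys_hom_ext {A : Type*} [CommRing A] {q n : ℕ} {a : Matrix (Fin n) (Fin n) A}
    {b : Fin n → A} {S : Type*} [CommRing S] [Algebra A S]
    {f g : (MvPolynomial (Fin n) A ⧸ sysIdeal q n a b) →ₐ[A] S}
    (h : ∀ i, f (Ideal.Quotient.mk _ (X i)) = g (Ideal.Quotient.mk _ (X i))) : f = g := by
  apply Ideal.Quotient.algHom_ext
  apply MvPolynomial.algHom_ext
  exact h

open MvPolynomial in
theorem sys_etale (p r : ℕ) [Fact p.Prime] (hr : 0 < r) {A : Type*} [CommRing A] [CharP A p]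
    {n : ℕ} (a : Matrix (Fin n) (Fin n) A) (b : Fin n → A) :
    Algebra.Etale A (MvPolynomial (Fin n) A ⧸ sysIdeal (p ^ r) n a b) := by
  have hfp : Algebra.FinitePresentation A (MvPolynomial (Fin n) A ⧸ sysIdeal (p ^ r) n a b) :=
    .quotient (Submodule.fg_span (Set.finite_range _))
  have hfe : Algebra.FormallyEtale A (MvPolynomial (Fin n) A ⧸ sysIdeal (p ^ r) n a b) := by
    refine Algebra.FormallyEtale.iff_comp_bijective.mpr fun S _ _ I hI => ?_
    rcases subsingleton_or_nontrivial S with hS | hS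
    · have hS' : Subsingleton (S ⧸ I) := Ideal.Quotient.mk_surjective.subsingleton
      refine ⟨fun f g _ => AlgHom.ext fun _ => Subsingleton.elim _ _, fun g => ?_⟩
      obtain ⟨f, -⟩ := hom_of_sys (A := A) (q := p ^ r) (a := a) (b := b) (fun _ => (0 : S))
        (fun _ => Subsingleton.elim _ _)
      exact ⟨f, AlgHom.ext fun _ => Subsingleton.elim _ _⟩
    have hp : (p : S) = 0 := by
      rw [← map_natCast (algebraMap A S), CharP.cast_eq_zero, map_zero]
    have hch : CharP S p := by
      exact (CharP.charP_iff_prime_eq_zero Fact.out).2 hp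
    constructor
    · intro f g hfg
      apply sys_hom_ext
      intro i
      have key : ∀ j, f (Ideal.Quotient.mk _ (X j)) ^ p ^ r =
          g (Ideal.Quotient.mk _ (X j)) ^ p ^ r := fun j =>
        frob_pow_eq p r hr I hI _ _ (Ideal.Quotient.eq.1 (DFunLike.congr_fun hfg _))
      have h1 := sys_of_hom f i
      have h2 := sys_of_hom g i
      simp only [key] at h1
      exact sub_left_injective (h1.trans h2.symm)
    · intro g
      choose y hy using fun i => Ideal.Quotient.mk_surjective (I := I)
        (g (Ideal.Quotient.mk _ (X i)))
      let x : Fin n → S := fun i => ∑ j, y j ^ p ^ r * algebraMap A S (a j i) + algebraMap A S (b i)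
      have hxy : ∀ i, Ideal.Quotient.mk I (x i) = Ideal.Quotient.mk I (y i) := by
        intro i
        have := sys_of_hom g i
        rw [hy, sub_eq_iff_eq_add.1 this]
        simp only [x, map_add, map_sum, map_mul, map_pow, hy]
        rw [add_comm]
        rfl
      have key : ∀ j, x j ^ p ^ r = y j ^ p ^ r := fun j =>
        frob_pow_eq p r hr I hI _ _ (Ideal.Quotient.eq.1 (hxy j))
      obtain ⟨f, hf⟩ := hom_of_sys (A := A) (q := p ^ r) (a := a) (b := b) x (by
        intro i
        simp only [key]
        simp [x])
      refine ⟨f, sys_hom_ext fun i => ?_⟩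
      rw [AlgHom.comp_apply, hf, ← hy, ← hxy]
      rfl
  exact { }

/-- Over a Henselian local ring of characteristic `p` with
algebraically closed residue field, every system `b'_i − ∑ j, (b'_j)^q · a_{ji} = b_i`
has a solution. -/
theorem statement11 (p r : ℕ) [Fact p.Prime] (hr : 0 < r)
    (A : Type*) [CommRing A] [HenselianLocalRing A] [CharP A p]
    [IsAlgClosed (IsLocalRing.ResidueField A)]
    (n : ℕ) (a : Matrix (Fin n) (Fin n) A) (b : Fin n → A) :
    ∃ b' : Fin n → A, ∀ i, b' i - ∑ j, (b' j) ^ p ^ r * a j i = b i := by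
  let k := IsLocalRing.ResidueField A
  have hk : CharP k p := by
    have hp : (p : k) = 0 := by
      rw [← map_natCast (algebraMap A k), CharP.cast_eq_zero, map_zero]
    exact (CharP.charP_iff_prime_eq_zero Fact.out).2 hp
  let φ : (Fin n → k) →+ (Fin n → k) := AddMonoidHom.mk'
    (fun v i => ∑ j, v j ^ p ^ r * algebraMap A k (a j i)) (by
      intro v w
      ext i
      simp [add_pow_char_pow, add_mul, Finset.sum_add_distrib])
  obtain ⟨x, hx⟩ := residual_solution p r hr k φ (by
    intro c v
    ext i
    simp only [φ, AddMonoidHom.mk'_apply, Pi.smul_apply, smul_eq_mul, mul_pow, mul_assoc]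
    exact (Finset.mul_sum _ _ _).symm) (fun i => algebraMap A k (b i))
  obtain ⟨ψ, -⟩ := hom_of_sys (A := A) (q := p ^ r) (a := a) (b := b) x (fun i => congrFun hx i)
  have := sys_etale p r hr a b
  obtain ⟨s⟩ := exists_section_of_etale A _ ψ
  exact ⟨_, fun i => sys_of_hom s i⟩
end

section
/- Let S → T be a homomorphism of commutative rings of characteristic p, and let (M, φ) be a unit S[F^r]-module. Then there is a well-defined additive map φ_T on T ⊗_S M determined by φ_T(t ⊗ m) = t^q ⊗ φ(m), it satisfies φ_T(c·x) = c^q·φ_T(x) for all c ∈ T and x ∈ T ⊗_S M, and (T ⊗_S M, φ_T) is a unit T[F^r]-module. Moreover, if (M, φ) is finitely generated as a left S[F^r]-module, then (T ⊗_S M, φ_T) is finitely generated as a left T[F^r]-module. -/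
/-!
Common definitions: unit `R[F^r]`-modules (Emerton–Kisin / Lyubeznik style), following
the conventions of the paper.  Throughout, `q = p ^ r` and for a commutative ring `R` of
(exponential) characteristic `p`, a unit `R[F^r]`-module is an `R`-module `M` together with
an additive `q`-semilinear map `φ : M → M` whose induced structural map
`R ⊗_{Frob} M → M`, `c ⊗ m ↦ c • φ m`, is bijective.
-/

open scoped TensorProduct

open scoped TensorProduct

section Helpers

/-- Left multiplication by `t` on the Frobenius twist. -/
noncomputable def twMul (p r : ℕ) (R : Type*) [CommRing R] [ExpChar R p] :
    R →+ (FrobTwist p r R →ₗ[R] FrobTwist p r R) :=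
  AddMonoidHom.mk' (fun t =>
    { toFun := fun x => (t * (show R from x) : R)
      map_add' := fun x y => mul_add t (show R from x) (show R from y)
      map_smul' := fun c x => mul_left_comm t (c ^ p ^ r) (show R from x) })
    (fun t u => LinearMap.ext fun x => add_mul t u (show R from x))

/-- Left multiplication by `t` on `FrobTwist ⊗ X`. -/
noncomputable def twL (p r : ℕ) (R : Type*) [CommRing R] [ExpChar R p]
    (X : Type*) [AddCommGroup X] [Module R X] (t : R) :
    FrobTwist p r R ⊗[R] X →+ FrobTwist p r R ⊗[R] X :=
  (LinearMap.rTensor X (twMul p r R t)).toAddMonoidHom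

theorem twL_tmul (p r : ℕ) (R : Type*) [CommRing R] [ExpChar R p]
    (X : Type*) [AddCommGroup X] [Module R X] (t : R) (c : FrobTwist p r R) (x : X) :
    twL p r R X t (c ⊗ₜ[R] x) =
      (show FrobTwist p r R from (t * (show R from c) : R)) ⊗ₜ[R] x := rfl

theorem twL_add (p r : ℕ) (R : Type*) [CommRing R] [ExpChar R p]
    (X : Type*) [AddCommGroup X] [Module R X] (t u : R) (y : FrobTwist p r R ⊗[R] X) :
    twL p r R X (t + u) y = twL p r R X t y + twL p r R X u y := by
  unfold twL
  rw [map_add, LinearMap.rTensor_add]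
  rfl

theorem twL_mul (p r : ℕ) (R : Type*) [CommRing R] [ExpChar R p]
    (X : Type*) [AddCommGroup X] [Module R X] (t u : R) (y : FrobTwist p r R ⊗[R] X) :
    twL p r R X (t * u) y = twL p r R X t (twL p r R X u y) := by
  induction y using TensorProduct.induction_on with
  | zero => simp only [map_zero]
  | add a b ha hb => simp only [map_add, ha, hb]
  | tmul c x =>
    simp only [twL_tmul]
    congr 1
    exact mul_assoc t u (show R from c)

theorem unitMap_tmul (p r : ℕ) (R : Type*) [CommRing R] [ExpChar R p]
    {M : Type*} [AddCommGroup M] [Module R M] (φ : M →+ M) (hφ : IsFrobSemilinear p r R φ)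
    (c : FrobTwist p r R) (m : M) :
    unitMap p r R φ hφ (c ⊗ₜ[R] m) = (show R from c) • φ m := rfl

theorem unitMap_twL (p r : ℕ) (R : Type*) [CommRing R] [ExpChar R p]
    {M : Type*} [AddCommGroup M] [Module R M] (φ : M →+ M) (hφ : IsFrobSemilinear p r R φ)
    (t : R) (y : FrobTwist p r R ⊗[R] M) :
    unitMap p r R φ hφ (twL p r R M t y) = t • unitMap p r R φ hφ y := by
  induction y using TensorProduct.induction_on with
  | zero => simp only [map_zero, smul_zero]
  | add a b ha hb => simp only [map_add, ha, hb, smul_add]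
  | tmul c x =>
    rw [twL_tmul, unitMap_tmul, unitMap_tmul]
    exact mul_smul t (show R from c) (φ x)

variable (p r : ℕ) (S : Type*) [CommRing S] [ExpChar S p]
    (T : Type*) [CommRing T] [ExpChar T p] [Algebra S T]
    (M : Type*) [AddCommGroup M] [Module S M]

/-- The base-changed Frobenius. -/
noncomputable def bcPhi (φ : M →+ M) (hφ : IsFrobSemilinear p r S φ) :
    T ⊗[S] M →+ T ⊗[S] M :=
  TensorProduct.liftAddHom
    (AddMonoidHom.mk'
      (fun t : T => AddMonoidHom.mk' (fun m : M => (t ^ p ^ r) ⊗ₜ[S] φ m)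
        (fun m m' => by rw [map_add, TensorProduct.tmul_add]))
      (fun t t' => by
        ext m
        show ((t + t') ^ p ^ r) ⊗ₜ[S] φ m = (t ^ p ^ r) ⊗ₜ[S] φ m + (t' ^ p ^ r) ⊗ₜ[S] φ m
        rw [add_pow_expChar_pow, TensorProduct.add_tmul]))
    (fun a t m => by
      show ((a • t) ^ p ^ r) ⊗ₜ[S] φ m = (t ^ p ^ r) ⊗ₜ[S] φ (a • m)
      rw [hφ, smul_pow, TensorProduct.smul_tmul])

theorem bcPhi_tmul (φ : M →+ M) (hφ : IsFrobSemilinear p r S φ) (t : T) (m : M) :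
    bcPhi p r S T M φ hφ (t ⊗ₜ[S] m) = (t ^ p ^ r) ⊗ₜ[S] φ m := rfl

theorem bcPhi_semilinear (φ : M →+ M) (hφ : IsFrobSemilinear p r S φ) :
    IsFrobSemilinear p r T (bcPhi p r S T M φ hφ) := by
  intro c x
  induction x using TensorProduct.induction_on with
  | zero => simp only [map_zero, smul_zero]
  | add a b ha hb => simp only [map_add, ha, hb, smul_add]
  | tmul t m =>
    rw [TensorProduct.smul_tmul', bcPhi_tmul, bcPhi_tmul, TensorProduct.smul_tmul',
      smul_eq_mul, smul_eq_mul, mul_pow]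

/-- `c ⊗ m ↦ c ⊗ (1 ⊗ m)`. -/
noncomputable def twJ : FrobTwist p r S ⊗[S] M →+ FrobTwist p r T ⊗[T] (T ⊗[S] M) :=
  TensorProduct.liftAddHom
    (AddMonoidHom.mk'
      (fun c : FrobTwist p r S => AddMonoidHom.mk'
        (fun m : M => (show FrobTwist p r T from algebraMap S T (show S from c)) ⊗ₜ[T]
          ((1 : T) ⊗ₜ[S] m))
        (fun m m' => by rw [TensorProduct.tmul_add, TensorProduct.tmul_add]))
      (fun c c' => by
        ext m
        show (show FrobTwist p r T from algebraMap S T ((show S from c) + (show S from c')))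
          ⊗ₜ[T] ((1 : T) ⊗ₜ[S] m) = _
        rw [map_add]
        exact TensorProduct.add_tmul _ _ _))
    (fun a c m => by
      show (show FrobTwist p r T from algebraMap S T (a ^ p ^ r * (show S from c)))
          ⊗ₜ[T] ((1 : T) ⊗ₜ[S] m) =
        (show FrobTwist p r T from algebraMap S T (show S from c)) ⊗ₜ[T] ((1 : T) ⊗ₜ[S] (a • m))
      have h1 : (1 : T) ⊗ₜ[S] (a • m) = algebraMap S T a • ((1 : T) ⊗ₜ[S] m) := by
        rw [algebraMap_smul, TensorProduct.tmul_smul]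
      rw [h1, ← TensorProduct.smul_tmul]
      congr 1
      show algebraMap S T (a ^ p ^ r * (show S from c)) =
        (algebraMap S T a) ^ p ^ r * algebraMap S T (show S from c)
      rw [map_mul, map_pow])

theorem twJ_tmul (c : FrobTwist p r S) (m : M) :
    twJ p r S T M (c ⊗ₜ[S] m) =
      (show FrobTwist p r T from algebraMap S T (show S from c)) ⊗ₜ[T] ((1 : T) ⊗ₜ[S] m) := rfl

theorem twJ_twL (s : S) (y : FrobTwist p r S ⊗[S] M) :
    twJ p r S T M (twL p r S M s y) =
      twL p r T (T ⊗[S] M) (algebraMap S T s) (twJ p r S T M y) := by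
  induction y using TensorProduct.induction_on with
  | zero => simp only [map_zero]
  | add a b ha hb => simp only [map_add, ha, hb]
  | tmul c x =>
    rw [twL_tmul, twJ_tmul, twJ_tmul, twL_tmul]
    congr 1
    exact map_mul (algebraMap S T) s (show S from c)

theorem unitMap_twJ (φ : M →+ M) (hφ : IsFrobSemilinear p r S φ)
    (y : FrobTwist p r S ⊗[S] M) :
    unitMap p r T (bcPhi p r S T M φ hφ) (bcPhi_semilinear p r S T M φ hφ) (twJ p r S T M y) =
      (1 : T) ⊗ₜ[S] unitMap p r S φ hφ y := by
  induction y using TensorProduct.induction_on with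
  | zero => simp only [map_zero, TensorProduct.tmul_zero]
  | add a b ha hb => simp only [map_add, ha, hb, TensorProduct.tmul_add]
  | tmul c x =>
    rw [twJ_tmul, unitMap_tmul, unitMap_tmul, bcPhi_tmul, one_pow]
    exact (algebraMap_smul T (show S from c) ((1 : T) ⊗ₜ[S] φ x)).trans
      (TensorProduct.tmul_smul _ _ _).symm

theorem bc_bijective (φ : M →+ M) (hφ : IsFrobSemilinear p r S φ)
    (hunit : Function.Bijective (unitMap p r S φ hφ)) :
    Function.Bijective
      (unitMap p r T (bcPhi p r S T M φ hφ) (bcPhi_semilinear p r S T M φ hφ)) := by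
  let e := AddEquiv.ofBijective (unitMap p r S φ hφ) hunit
  have he : ∀ m, unitMap p r S φ hφ (e.symm m) = m := fun m => e.apply_symm_apply m
  have he_smul : ∀ (s : S) m, e.symm (s • m) = twL p r S M s (e.symm m) := by
    intro s m
    apply hunit.1
    rw [he, unitMap_twL, he]
  have he_phi : ∀ m, e.symm (φ m) = (show FrobTwist p r S from (1 : S)) ⊗ₜ[S] m := by
    intro m
    apply hunit.1
    rw [he, unitMap_tmul]
    exact (one_smul S (φ m)).symm
  let ψ : T ⊗[S] M →+ FrobTwist p r T ⊗[T] (T ⊗[S] M) :=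
    TensorProduct.liftAddHom
      (AddMonoidHom.mk'
        (fun t : T => (twL p r T (T ⊗[S] M) t).comp ((twJ p r S T M).comp e.symm.toAddMonoidHom))
        (fun t t' => by
          ext m
          exact twL_add p r T _ t t' _))
      (fun a t m => by
        show twL p r T (T ⊗[S] M) (a • t) (twJ p r S T M (e.symm m)) =
          twL p r T (T ⊗[S] M) t (twJ p r S T M (e.symm (a • m)))
        rw [he_smul, twJ_twL, ← twL_mul, Algebra.smul_def, mul_comm])
  have hψ : ∀ t m, ψ (t ⊗ₜ[S] m) = twL p r T (T ⊗[S] M) t (twJ p r S T M (e.symm m)) :=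
    fun _ _ => rfl
  refine Function.bijective_iff_has_inverse.2 ⟨ψ, ?_, ?_⟩
  · intro y
    induction y using TensorProduct.induction_on with
    | zero => simp only [map_zero]
    | add a b ha hb => simp only [map_add, ha, hb]
    | tmul c x =>
      induction x using TensorProduct.induction_on with
      | zero => simp only [map_zero, TensorProduct.tmul_zero]
      | add a b ha hb => simp only [map_add, ha, hb, TensorProduct.tmul_add]
      | tmul t m =>
        rw [unitMap_tmul, bcPhi_tmul, TensorProduct.smul_tmul', hψ, he_phi, twJ_tmul, twL_tmul]
        have h1 : t ⊗ₜ[S] m = t • ((1 : T) ⊗ₜ[S] m) := by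
          rw [TensorProduct.smul_tmul', smul_eq_mul, mul_one]
        rw [h1, ← TensorProduct.smul_tmul]
        congr 1
        show (show T from c) * t ^ p ^ r * algebraMap S T 1 = t ^ p ^ r * (show T from c)
        rw [map_one, mul_one, mul_comm]
  · intro x
    induction x using TensorProduct.induction_on with
    | zero => simp only [map_zero]
    | add a b ha hb => simp only [map_add, ha, hb]
    | tmul t m =>
      rw [hψ, unitMap_twL, unitMap_twJ, he, TensorProduct.smul_tmul', smul_eq_mul, mul_one]

theorem bc_fg (φ : M →+ M) (hφ : IsFrobSemilinear p r S φ) (h : IsFGFMod S φ) :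
    IsFGFMod T (bcPhi p r S T M φ hφ) := by
  classical
  obtain ⟨s, hs⟩ := h
  refine ⟨s.image (fun m => (1 : T) ⊗ₜ[S] m), fun N hN hsN => ?_⟩
  have key := hs ((N.restrictScalars S).comap (TensorProduct.mk S T M 1))
    (fun x hx => by
      have := hN _ hx
      rw [TensorProduct.mk_apply, bcPhi_tmul, one_pow] at this
      exact this)
    (fun x hx => hsN (Finset.mem_coe.2 (Finset.mem_image_of_mem _ hx)))
  rw [eq_top_iff]
  rintro x -
  induction x using TensorProduct.induction_on with
  | zero => exact N.zero_mem
  | add a b ha hb => exact N.add_mem ha hb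
  | tmul t m =>
    have hm : m ∈ (N.restrictScalars S).comap (TensorProduct.mk S T M 1) := key ▸ trivial
    have h1 : t ⊗ₜ[S] m = t • ((1 : T) ⊗ₜ[S] m) := by
      rw [TensorProduct.smul_tmul', smul_eq_mul, mul_one]
    rw [h1]
    exact N.smul_mem t hm

end Helpers

/-- Base change of unit modules: for a homomorphism `S → T` of
commutative rings of characteristic `p` and a unit `S[F^r]`-module `(M, φ)`, there is a
unique additive map `φ_T` on `T ⊗_S M` with `φ_T (t ⊗ m) = t^q ⊗ φ m`; it is
`q`-semilinear, `(T ⊗_S M, φ_T)` is a unit `T[F^r]`-module, and it is finitely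
generated over `T[F^r]` whenever `(M, φ)` is finitely generated over `S[F^r]`. -/
theorem statement16 (p r : ℕ) [Fact p.Prime] (hr : 0 < r)
    (S : Type*) [CommRing S] [CharP S p]
    (T : Type*) [CommRing T] [CharP T p] [Algebra S T]
    (M : Type*) [AddCommGroup M] [Module S M]
    (φ : M →+ M) (hφ : IsFrobSemilinear p r S φ)
    (hunit : Function.Bijective (unitMap p r S φ hφ)) :
    ∃ φT : T ⊗[S] M →+ T ⊗[S] M,
      (∀ (t : T) (m : M), φT (t ⊗ₜ[S] m) = (t ^ p ^ r) ⊗ₜ[S] φ m) ∧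
      (∀ φT' : T ⊗[S] M →+ T ⊗[S] M,
        (∀ (t : T) (m : M), φT' (t ⊗ₜ[S] m) = (t ^ p ^ r) ⊗ₜ[S] φ m) → φT' = φT) ∧
      IsFrobSemilinear p r T φT ∧
      IsUnitFMod p r T φT ∧
      (IsFGFMod S φ → IsFGFMod T φT) := by
  refine ⟨bcPhi p r S T M φ hφ, fun _ _ => rfl, fun φ' h => ?_,
    bcPhi_semilinear p r S T M φ hφ,
    ⟨bcPhi_semilinear p r S T M φ hφ, bc_bijective p r S T M φ hφ hunit⟩,
    bc_fg p r S T M φ hφ⟩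
  ext x
  induction x using TensorProduct.induction_on with
  | zero => simp only [map_zero]
  | add a b ha hb => simp only [map_add, ha, hb]
  | tmul t m => rw [h, bcPhi_tmul]
end

section
/- Let k be an algebraically closed field of characteristic p and let V be a finite-dimensional k-vector space equipped with an additive map φ : V → V satisfying φ(c·v) = c^q·φ(v) for all c ∈ k, v ∈ V. Then there exists a unique decomposition V = V^{ss} ⊕ V^{nil} into φ-stable k-subspaces such that (V^{ss}, φ|_{V^{ss}}) is a unit k[F^r]-module and the restriction of φ to V^{nil} is nilpotent (some iterate of φ vanishes on V^{nil}). -/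
/-!
Common definitions: unit `R[F^r]`-modules (Emerton–Kisin / Lyubeznik style), following
the conventions of the paper.  Throughout, `q = p ^ r` and for a commutative ring `R` of
(exponential) characteristic `p`, a unit `R[F^r]`-module is an `R`-module `M` together with
an additive `q`-semilinear map `φ : M → M` whose induced structural map
`R ⊗_{Frob} M → M`, `c ⊗ m ↦ c • φ m`, is bijective.
-/

open scoped TensorProduct

section Statement17

variable (p r : ℕ) [Fact p.Prime]
variable (k : Type*) [Field k] [IsAlgClosed k] [CharP k p]
variable {V : Type*} [AddCommGroup V] [Module k V]

/-- `(Vss, Vnil)` is a Fitting decomposition of `(V, φ)`: `V = Vss ⊕ Vnil`, both are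
`φ`-stable, `(Vss, φ|_{Vss})` is a unit `k[F^r]`-module, and `φ` is nilpotent on
`Vnil`. -/
def IsFittingDecomp (φ : V →+ V) (Vss Vnil : Submodule k V) : Prop :=
  IsCompl Vss Vnil ∧
  (∀ v ∈ Vss, φ v ∈ Vss) ∧ (∀ v ∈ Vnil, φ v ∈ Vnil) ∧
  (∃ φs : Vss →+ Vss, (∀ v : Vss, ((φs v : Vss) : V) = φ (v : V)) ∧
    IsUnitFMod p r k φs) ∧
  (∃ N : ℕ, ∀ v ∈ Vnil, (⇑φ)^[N] v = 0)

theorem st17_iter {φ : V →+ V} (hφ : IsFrobSemilinear p r k φ) (n : ℕ) (c : k) (v : V) :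
    (⇑φ)^[n] (c • v) = c ^ (p ^ r) ^ n • (⇑φ)^[n] v := by
  induction n with
  | zero => simp
  | succ n ih =>
    rw [Function.iterate_succ_apply', Function.iterate_succ_apply', ih, hφ, ← pow_mul, pow_succ]

theorem st17_root (n : ℕ) (c : k) : ∃ d : k, d ^ (p ^ r) ^ n = c :=
  IsAlgClosed.exists_pow_nat_eq c (pow_pos (pow_pos (Fact.out : p.Prime).pos r) n)

/-- Kernel of the `n`-th iterate. -/
def st17Ker (φ : V →+ V) (hφ : IsFrobSemilinear p r k φ) (n : ℕ) : Submodule k V where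
  carrier := {v | (⇑φ)^[n] v = 0}
  zero_mem' := iterate_map_zero φ n
  add_mem' {a b} ha hb := by
    simp only [Set.mem_setOf_eq] at *
    rw [iterate_map_add, ha, hb, add_zero]
  smul_mem' c v hv := by
    simp only [Set.mem_setOf_eq] at *
    rw [st17_iter p r k hφ, hv, smul_zero]

/-- Range of the `n`-th iterate. -/
def st17Range (φ : V →+ V) (hφ : IsFrobSemilinear p r k φ) (n : ℕ) : Submodule k V where
  carrier := {v | ∃ w, (⇑φ)^[n] w = v}
  zero_mem' := ⟨0, iterate_map_zero φ n⟩
  add_mem' := by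
    rintro _ _ ⟨a, rfl⟩ ⟨b, rfl⟩
    exact ⟨a + b, iterate_map_add φ n a b⟩
  smul_mem' := by
    rintro c _ ⟨a, rfl⟩
    obtain ⟨d, rfl⟩ := st17_root p r k n c
    exact ⟨d • a, st17_iter p r k hφ n d a⟩

theorem st17_tensor {M : Type*} [AddCommGroup M] [Module k M]
    (t : FrobTwist p r k ⊗[k] M) :
    ∃ m : M, t = (show FrobTwist p r k from (1 : k)) ⊗ₜ[k] m := by
  induction t with
  | zero => exact ⟨0, (TensorProduct.tmul_zero _ _).symm⟩
  | tmul c m =>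
    obtain ⟨d, hd⟩ := st17_root p r k 1 (show k from c)
    refine ⟨d • m, ?_⟩
    rw [← TensorProduct.smul_tmul]
    congr 1
    rw [FrobTwist.smul_def]
    rw [pow_one] at hd
    show c = d ^ p ^ r * (1 : k)
    rw [mul_one, hd]
  | add x y hx hy =>
    obtain ⟨a, rfl⟩ := hx
    obtain ⟨b, rfl⟩ := hy
    exact ⟨a + b, (TensorProduct.tmul_add _ _ _).symm⟩

theorem st17_unitMap {M : Type*} [AddCommGroup M] [Module k M] (φ : M →+ M)
    (hφ : IsFrobSemilinear p r k φ) (m : M) :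
    unitMap p r k φ hφ ((show FrobTwist p r k from (1 : k)) ⊗ₜ[k] m) = φ m := by
  show (1 : k) • φ m = φ m
  exact one_smul _ _

theorem st17_unit_of_bij {M : Type*} [AddCommGroup M] [Module k M] (φ : M →+ M)
    (hφ : IsFrobSemilinear p r k φ) (h : Function.Bijective φ) : IsUnitFMod p r k φ := by
  refine ⟨hφ, fun s t hst => ?_, fun m => ?_⟩
  · obtain ⟨a, rfl⟩ := st17_tensor p r k s
    obtain ⟨b, rfl⟩ := st17_tensor p r k t
    rw [st17_unitMap, st17_unitMap] at hst
    rw [h.1 hst]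
  · obtain ⟨a, rfl⟩ := h.2 m
    exact ⟨_, st17_unitMap p r k φ hφ a⟩

theorem st17_surj_of_unit {M : Type*} [AddCommGroup M] [Module k M] (φ : M →+ M)
    (h : IsUnitFMod p r k φ) : Function.Surjective φ := by
  obtain ⟨hφ, h⟩ := h
  intro m
  obtain ⟨t, rfl⟩ := h.2 m
  obtain ⟨a, rfl⟩ := st17_tensor p r k t
  exact ⟨a, (st17_unitMap p r k φ hφ a).symm⟩

theorem st17_stab [FiniteDimensional k V] (φ : V →+ V) (hφ : IsFrobSemilinear p r k φ) :
    ∃ n : ℕ, (∀ m, st17Ker p r k φ hφ m ≤ st17Ker p r k φ hφ n) ∧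
      (∀ m, st17Range p r k φ hφ n ≤ st17Range p r k φ hφ m) := by
  have hK : Monotone (st17Ker p r k φ hφ) := by
    refine monotone_nat_of_le_succ fun n v hv => ?_
    change (⇑φ)^[n] v = 0 at hv
    change (⇑φ)^[n + 1] v = 0
    rw [Function.iterate_succ_apply', hv, map_zero]
  have hR : Antitone (st17Range p r k φ hφ) := by
    refine antitone_nat_of_succ_le fun n v hv => ?_
    obtain ⟨w, rfl⟩ := hv
    exact ⟨φ w, (Function.iterate_succ_apply _ _ _).symm⟩
  obtain ⟨n₁, h₁⟩ := monotone_stabilizes_iff_noetherian.mpr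
    (inferInstance : IsNoetherian k V) ⟨_, hK⟩
  obtain ⟨n₂, h₂⟩ := monotone_stabilizes_iff_artinian.mpr
    (inferInstance : IsArtinian k V) ⟨fun n => OrderDual.toDual (st17Range p r k φ hφ n), hR⟩
  have h₁' : ∀ m, n₁ ≤ m → st17Ker p r k φ hφ n₁ = st17Ker p r k φ hφ m := h₁
  have h₂' : ∀ m, n₂ ≤ m → st17Range p r k φ hφ n₂ = st17Range p r k φ hφ m := h₂
  refine ⟨max n₁ n₂, fun m => ?_, fun m => ?_⟩
  · rw [← h₁' _ (le_max_left _ _), h₁' _ (le_max_left n₁ m)]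
    exact hK (le_max_right _ _)
  · rw [← h₂' _ (le_max_right _ _), h₂' _ (le_max_left n₂ m)]
    exact hR (le_max_right _ _)

/-- Fitting decomposition: every `q`-semilinear endomorphism `φ` of a
finite-dimensional vector space `V` over an algebraically closed field `k` of
characteristic `p` admits a unique decomposition `V = V^ss ⊕ V^nil` into `φ`-stable
subspaces with `(V^ss, φ)` unit and `φ` nilpotent on `V^nil`. -/
theorem statement17 (hr : 0 < r) [FiniteDimensional k V]
    (φ : V →+ V) (hφ : IsFrobSemilinear p r k φ) :
    ∃ Vss Vnil : Submodule k V, IsFittingDecomp p r k φ Vss Vnil ∧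
      ∀ Vss' Vnil' : Submodule k V,
        IsFittingDecomp p r k φ Vss' Vnil' → Vss' = Vss ∧ Vnil' = Vnil := by
  obtain ⟨n, hK, hR⟩ := st17_stab p r k φ hφ
  have hdisj : ∀ x, x ∈ st17Range p r k φ hφ n → ∀ m, (⇑φ)^[m] x = 0 → x = 0 := by
    rintro _ ⟨y, rfl⟩ m hx
    rw [← Function.iterate_add_apply] at hx
    exact hK (m + n) hx
  have hcompl : IsCompl (st17Range p r k φ hφ n) (st17Ker p r k φ hφ n) := by
    refine ⟨Submodule.disjoint_def.2 fun x hx hx' => hdisj x hx n hx', ?_⟩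
    refine codisjoint_iff.2 (eq_top_iff.2 fun v _ => ?_)
    obtain ⟨w, hw⟩ := hR (n + n) ⟨v, rfl⟩
    rw [Function.iterate_add_apply] at hw
    refine Submodule.mem_sup.2 ⟨(⇑φ)^[n] w, ⟨w, rfl⟩, v - (⇑φ)^[n] w, ?_, by abel⟩
    change (⇑φ)^[n] (v - (⇑φ)^[n] w) = 0
    rw [iterate_map_sub, hw, sub_self]
  have hRs : ∀ v ∈ st17Range p r k φ hφ n, φ v ∈ st17Range p r k φ hφ n := by
    rintro _ ⟨w, rfl⟩
    exact ⟨φ w, by rw [← Function.iterate_succ_apply, Function.iterate_succ_apply']⟩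
  refine ⟨st17Range p r k φ hφ n, st17Ker p r k φ hφ n,
    ⟨hcompl, hRs, fun v hv => ?_, ?_, n, fun v hv => hv⟩, ?_⟩
  · change (⇑φ)^[n] v = 0 at hv
    change (⇑φ)^[n] (φ v) = 0
    rw [← Function.iterate_succ_apply, Function.iterate_succ_apply', hv, map_zero]
  · refine ⟨AddMonoidHom.mk' (fun v => ⟨φ v, hRs v v.2⟩)
      (fun a b => Subtype.ext (map_add φ (a : V) (b : V))), fun v => rfl, ?_⟩
    refine st17_unit_of_bij p r k _ (fun c m => Subtype.ext (hφ c m)) ⟨?_, ?_⟩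
    · refine (injective_iff_map_eq_zero _).2 fun a ha => Subtype.ext ?_
      exact hdisj a a.2 1 (congrArg Subtype.val ha)
    · rintro ⟨v, hv⟩
      obtain ⟨w, hw⟩ := hR (n + 1) hv
      rw [Function.iterate_succ_apply'] at hw
      exact ⟨⟨(⇑φ)^[n] w, w, rfl⟩, Subtype.ext hw⟩
  · rintro S N ⟨hc, hS, hN, ⟨φs, hφs, hu⟩, m, hm⟩
    have hsurj := st17_surj_of_unit p r k φs hu
    have hSle : S ≤ st17Range p r k φ hφ n := by
      intro v hv
      have key : ∀ j : ℕ, ∀ v : S, ∃ w : S, (⇑φ)^[j] (w : V) = v := by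
        intro j
        induction j with
        | zero => exact fun v => ⟨v, rfl⟩
        | succ j ih =>
          intro v
          obtain ⟨w, hw⟩ := ih v
          obtain ⟨u, rfl⟩ := hsurj w
          exact ⟨u, by rw [Function.iterate_succ_apply, ← hφs, hw]⟩
      obtain ⟨w, hw⟩ := key n ⟨v, hv⟩
      exact ⟨w, hw⟩
    have hNle : N ≤ st17Ker p r k φ hφ n := fun v hv => hK m (hm v hv)
    constructor
    · refine eq_of_le_of_inf_le_of_sup_le (z := N) hSle ?_ ?_
      · exact ((inf_le_inf_left _ hNle).trans hcompl.inf_eq_bot.le).trans bot_le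
      · rw [hc.sup_eq_top]; exact le_top
    · refine eq_of_le_of_inf_le_of_sup_le (z := S) hNle ?_ ?_
      · exact ((inf_le_inf_left _ hSle).trans hcompl.symm.inf_eq_bot.le).trans bot_le
      · rw [hc.symm.sup_eq_top]; exact le_top

end Statement17
end
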